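/- Conventions. Let $X'$ be a metric space. A geodesic is an isometric embedding of a closed interval of $\mathbb{R}$ into $X'$; a geodesic ray based at $x$ is an isometric embedding $\gamma:[0,\infty)\to X'$ with $\gamma(0)=x$. For $Q\ge 1$, a $Q$-quasi-geodesic is a continuous map $\gamma: I\to X'$ from an interval $I\subseteq\mathbb{R}$ with $\frac{|t-s|}{Q}-Q\le d(\gamma(s),\gamma(t))\le Q|t-s|+Q$ for all $s,t\in I$. A Morse gauge is a non-decreasing continuous function $M:[1,\infty)\to[0,\infty)$; a quasi-geodesic $\gamma$ is $M$-Morse if for every $Q\ge1$ every $Q$-quasi-geodesic with endpoints $\gamma(s)$ and $\gamma(t)$ lies in the closed $M(Q)$-neighbourhood of $\gamma[s,t]$. The space $X'$ has the Morse local-to-global property if for every $Q\ge 1$ and every Morse gauge $M$ there are $L>0$, $Q'\ge1$ and a Morse gauge $M'$ such that every path $p:I\to X'$, all of whose subpaths $p[s,t]$ with $|t-s|\le L$ are $M$-Morse $Q$-quasi-geodesics, is an $M'$-Morse $Q'$-quasi-geodesic. The space $X'$ is Gromov hyperbolic if for some $\delta\ge0$ every side of every geodesic triangle lies in the $\delta$-neighbourhood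 of the union of the other two sides. A geodesic (ray) $\gamma$ is strongly contracting if there is a constant $C$ such that for every $x\in X'$ the closest-point projection to $\gamma$ of the ball of radius $d(x,\gamma)$ around $x$ has diameter at most $C$. An action by isometries is geometric if it is proper and cocompact. Statement. Let $G$ be a finitely generated group acting geometrically on a proper geodesic metric space $X'$ with basepoint $x_0'$, such that $X'$ is not Gromov hyperbolic, has the Morse local-to-global property, and contains a strongly contracting geodesic ray based at $x_0'$. Let $N$ be a Morse gauge. Then there exists a sequence $(\eta_i)_{i\in\mathbb{N}}$ of geodesic segments, each from $x_0'$ to a point of the orbit $G\cdot x_0'$, such that for every geodesic segment $\lambda$ from $x_0'$ to a point of $G\cdot x_0'$ there exist indices $i_0,i_1\in\mathbb{N}$ with the properties (i) and (ii) below. Here, for a geodesic segment $\eta$ from $x_0'$ to a point of $G\cdot x_0'$ and any choice of $g\in G$ such that $g\cdot x_0'$ is the endpoint of $\eta$, we write $\eta\ast_T\lambda$ for the concatenation of $\eta$ with the translate $g\cdot\lambda$; the statements hold for all such choices of $g$ (made independently for different $\eta_i$). (i) For all $i\ne j$ with $i,j\notin\{i_0,i_1\}$: if $x$ and $y$ are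 the endpoints of $\eta_i\ast_T\lambda$ and $\eta_j\ast_T\lambda$ respectively, then no geodesic from $x$ to $y$ is $N$-Morse. (ii) For all $i\notin\{i_0,i_1\}$: if $x'$ and $y'$ are the endpoints of $\eta_i\ast_T\lambda$ and of $\lambda$ respectively, then no geodesic from $x'$ to $y'$ is $N$-Morse. -/

import Mathlib

namespace MorseLTG

/-- A Morse gauge: a non-decreasing continuous function `[1, ∞) → [0, ∞)`
(the values of `M` outside `[1, ∞)` are never used). -/
def IsMorseGauge (M : ℝ → ℝ) : Prop :=
  MonotoneOn M (Set.Ici 1) ∧ ContinuousOn M (Set.Ici 1) ∧ ∀ t : ℝ, 1 ≤ t → 0 ≤ M t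

section Space

variable {X : Type*} [MetricSpace X]

/-- `γ` restricted to `I ⊆ ℝ` is a (continuous) `Q`-quasi-geodesic. -/
def QGeoOn (Q : ℝ) (I : Set ℝ) (γ : ℝ → X) : Prop :=
  ContinuousOn γ I ∧ ∀ s ∈ I, ∀ t ∈ I,
    |t - s| / Q - Q ≤ dist (γ s) (γ t) ∧ dist (γ s) (γ t) ≤ Q * |t - s| + Q

/-- `γ` restricted to `I` is `M`-Morse: every `Q`-quasi-geodesic `lam : [a, b] → X` from `γ s` to
`γ t` stays in the closed `M Q`-neighbourhood of `γ[s, t]`. -/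
def MorseOn (M : ℝ → ℝ) (I : Set ℝ) (γ : ℝ → X) : Prop :=
  ∀ Q : ℝ, 1 ≤ Q → ∀ s ∈ I, ∀ t ∈ I, s ≤ t →
    ∀ (lam : ℝ → X) (a b : ℝ), a ≤ b → QGeoOn Q (Set.Icc a b) lam →
      lam a = γ s → lam b = γ t →
      ∀ u ∈ Set.Icc a b, ∃ v ∈ Set.Icc s t, dist (lam u) (γ v) ≤ M Q

/-- `γ` restricted to `I` is a geodesic (an isometric embedding). -/
def GeodesicOn (I : Set ℝ) (γ : ℝ → X) : Prop :=
  ∀ s ∈ I, ∀ t ∈ I, dist (γ s) (γ t) = |t - s|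

/-- `γ : [0, T] → X` is a geodesic segment from `x` to `y`. -/
def IsGeodesicSegment (γ : ℝ → X) (T : ℝ) (x y : X) : Prop :=
  0 ≤ T ∧ γ 0 = x ∧ γ T = y ∧ GeodesicOn (Set.Icc 0 T) γ

/-- `γ : [0, ∞) → X` is a geodesic ray based at `x₀`. -/
def IsGeodesicRay (γ : ℝ → X) (x₀ : X) : Prop :=
  γ 0 = x₀ ∧ GeodesicOn (Set.Ici 0) γ

/-- `p : I → X` is `L`-locally an `M`-Morse `Q`-quasi-geodesic. -/
def LocMorseQGeoOn (Q : ℝ) (M : ℝ → ℝ) (L : ℝ) (I : Set ℝ) (p : ℝ → X) : Prop :=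
  ∀ s ∈ I, ∀ t ∈ I, s ≤ t → t - s ≤ L →
    QGeoOn Q (Set.Icc s t) p ∧ MorseOn M (Set.Icc s t) p

/-- The set of closest-point projections of `x` to `A`. -/
def projSet (A : Set X) (x : X) : Set X :=
  {y ∈ A | ∀ z ∈ A, dist x y ≤ dist x z}

/-- `A` is `C`-contracting: for every `x`, the projection to `A` of the ball of radius `d(x, A)`
around `x` has diameter at most `C`. -/
def ContractingSet (C : ℝ) (A : Set X) : Prop :=
  ∀ x : X, ∀ y ∈ Metric.ball x (Metric.infDist x A), ∀ z ∈ Metric.ball x (Metric.infDist x A),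
    ∀ p ∈ projSet A y, ∀ q ∈ projSet A z, dist p q ≤ C

end Space

/-- `X` is a geodesic metric space. -/
def GeodesicSpace (X : Type*) [MetricSpace X] : Prop :=
  ∀ x y : X, ∃ (γ : ℝ → X) (T : ℝ), IsGeodesicSegment γ T x y

/-- The Morse local-to-global property. Paths are defined on arbitrary intervals `I ⊆ ℝ`. -/
def MLTG (X : Type*) [MetricSpace X] : Prop :=
  ∀ Q : ℝ, 1 ≤ Q → ∀ M : ℝ → ℝ, IsMorseGauge M →
    ∃ (L Q' : ℝ) (M' : ℝ → ℝ), 0 < L ∧ 1 ≤ Q' ∧ IsMorseGauge M' ∧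
      ∀ I : Set ℝ, I.OrdConnected → ∀ p : ℝ → X,
        LocMorseQGeoOn Q M L I p → QGeoOn Q' I p ∧ MorseOn M' I p

/-- Gromov hyperbolicity via thin geodesic triangles. (The condition is imposed on one side of
every cyclically labelled triangle, hence on all three sides.) -/
def GromovHyperbolic (X : Type*) [MetricSpace X] : Prop :=
  ∃ δ : ℝ, 0 ≤ δ ∧
    ∀ (x y z : X) (γ₁ γ₂ γ₃ : ℝ → X) (T₁ T₂ T₃ : ℝ),
      IsGeodesicSegment γ₁ T₁ x y → IsGeodesicSegment γ₂ T₂ y z → IsGeodesicSegment γ₃ T₃ z x →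
      ∀ s ∈ Set.Icc 0 T₁,
        ∃ p ∈ γ₂ '' Set.Icc 0 T₂ ∪ γ₃ '' Set.Icc 0 T₃, dist (γ₁ s) p ≤ δ

/-- The action of `G` on `X` is geometric: by isometries, proper and cocompact. -/
def IsGeometricAction (G X : Type*) [Group G] [MetricSpace X] [MulAction G X] : Prop :=
  IsIsometricSMul G X ∧ ProperlyDiscontinuousSMul G X ∧
    ∃ K : Set X, IsCompact K ∧ ∀ y : X, ∃ g : G, ∃ k ∈ K, g • k = y

/-- The translated concatenation `η ∗_T lam`: the path `η : [0, T] → X`, which ends at `g • x₀`,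
followed by the translate by `g` of a path `lam : [0, T'] → X` starting at `x₀`.
It is a path on `[0, T + T']`. -/
noncomputable def transConcat {G X : Type*} [Group G] [MulAction G X]
    (g : G) (η : ℝ → X) (T : ℝ) (lam : ℝ → X) : ℝ → X :=
  fun t => if t ≤ T then η t else g • lam (t - T)

end MorseLTG

namespace MorseLTG

section Geodesics

variable {X : Type*} [MetricSpace X]

lemma IsGeodesicSegment.dist_eq {γ : ℝ → X} {T : ℝ} {x y : X} (h : IsGeodesicSegment γ T x y) :
    dist x y = T := by
  obtain ⟨hT, rfl, rfl, hg⟩ := h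
  rw [hg 0 ⟨le_rfl, hT⟩ T ⟨hT, le_rfl⟩, sub_zero, abs_of_nonneg hT]

lemma IsGeodesicSegment.reverse {γ : ℝ → X} {T : ℝ} {x y : X} (h : IsGeodesicSegment γ T x y) :
    IsGeodesicSegment (fun t => γ (T - t)) T y x := by
  obtain ⟨hT, hx, hy, hg⟩ := h
  refine ⟨hT, by simpa using hy, by simpa using hx, fun s hs t ht => ?_⟩
  rw [hg (T - s) ⟨by linarith [hs.2], by linarith [hs.1]⟩ (T - t)
    ⟨by linarith [ht.2], by linarith [ht.1]⟩, abs_sub_comm]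
  congr 1; ring

lemma IsGeodesicSegment.sub {γ : ℝ → X} {T : ℝ} {x y : X} (h : IsGeodesicSegment γ T x y)
    {s t : ℝ} (hs : 0 ≤ s) (hst : s ≤ t) (ht : t ≤ T) :
    IsGeodesicSegment (fun u => γ (s + u)) (t - s) (γ s) (γ t) := by
  obtain ⟨hT, hx, hy, hg⟩ := h
  refine ⟨by linarith, by simp, by simp, fun a ha b hb => ?_⟩
  rw [hg (s + a) ⟨by linarith [ha.1], by linarith [ha.2]⟩ (s + b)
    ⟨by linarith [hb.1], by linarith [hb.2]⟩]
  congr 1; ring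

lemma IsGeodesicSegment.initial {γ : ℝ → X} {T : ℝ} {x y : X} (h : IsGeodesicSegment γ T x y)
    {t : ℝ} (ht0 : 0 ≤ t) (ht : t ≤ T) : IsGeodesicSegment γ t x (γ t) :=
  ⟨ht0, h.2.1, rfl, fun a ha b hb =>
    h.2.2.2 a ⟨ha.1, ha.2.trans ht⟩ b ⟨hb.1, hb.2.trans ht⟩⟩

lemma GeodesicOn.continuousOn {γ : ℝ → X} {I : Set ℝ} (h : GeodesicOn I γ) :
    ContinuousOn γ I := by
  have : LipschitzOnWith 1 γ I := by
    refine LipschitzOnWith.of_dist_le_mul fun s hs t ht => ?_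
    rw [h s hs t ht, Real.dist_eq, abs_sub_comm]; simp
  exact this.continuousOn

lemma IsGeodesicSegment.dist_left {γ : ℝ → X} {T : ℝ} {x y : X} (h : IsGeodesicSegment γ T x y)
    {s : ℝ} (hs : s ∈ Set.Icc 0 T) : dist x (γ s) = s := by
  rw [← h.2.1, h.2.2.2 0 ⟨le_rfl, h.1⟩ s hs, sub_zero, abs_of_nonneg hs.1]

lemma IsGeodesicSegment.dist_right {γ : ℝ → X} {T : ℝ} {x y : X} (h : IsGeodesicSegment γ T x y)
    {s : ℝ} (hs : s ∈ Set.Icc 0 T) : dist (γ s) y = T - s := by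
  rw [← h.2.2.1, h.2.2.2 s hs T ⟨h.1, le_rfl⟩, abs_of_nonneg (by linarith [hs.2])]

lemma infDist_eq_of_mem_projSet {A : Set X} {x p : X} (hp : p ∈ projSet A x) :
    Metric.infDist x A = dist x p := by
  apply le_antisymm (Metric.infDist_le_dist_of_mem hp.1)
  exact (Metric.le_infDist ⟨p, hp.1⟩).2 fun {z} hz => hp.2 z hz

lemma self_mem_projSet {A : Set X} {x : X} (hx : x ∈ A) : x ∈ projSet A x :=
  ⟨hx, fun z _ => by simp⟩

/-- The projection of `x` is also the projection of every point on a geodesic towards it. -/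
lemma mem_projSet_of_geodesic {A : Set X} {x q : X} (hq : q ∈ projSet A x) {α : ℝ → X} {S : ℝ}
    (hα : IsGeodesicSegment α S x q) {s : ℝ} (hs : s ∈ Set.Icc 0 S) : q ∈ projSet A (α s) := by
  refine ⟨hq.1, fun z hz => ?_⟩
  have h1 := hα.dist_left hs
  have h2 := hα.dist_right hs
  have h3 := hα.dist_eq
  have h4 := hq.2 z hz
  have h5 := dist_triangle x (α s) z
  linarith

end Geodesics

section Contracting

variable {X : Type*} [MetricSpace X]

/-- Geodesics between points whose projections to `A` are more than `D` apart pass `D`-close to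
both projections. -/
def Bottleneck (D : ℝ) (A : Set X) : Prop :=
  0 ≤ D ∧ ∀ x y p q : X, p ∈ projSet A x → q ∈ projSet A y → D < dist p q →
    ∀ (α : ℝ → X) (S : ℝ), IsGeodesicSegment α S x y →
      (∃ s ∈ Set.Icc 0 S, dist (α s) p ≤ D) ∧ (∃ s ∈ Set.Icc 0 S, dist (α s) q ≤ D)

lemma ContractingSet.mono {C C' : ℝ} {A : Set X} (h : ContractingSet C A) (hC : C ≤ C') :
    ContractingSet C' A :=
  fun x y hy z hz p hp q hq => (h x y hy z hz p hp q hq).trans hC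

/-- Projections move by at most `C` along a short geodesic far away from `A`. -/
lemma ContractingSet.dist_proj_le {C : ℝ} {A : Set X} (h : ContractingSet C A) {x y p q : X}
    (hp : p ∈ projSet A x) (hq : q ∈ projSet A y) (hxy : dist x y < Metric.infDist x A) :
    dist p q ≤ C := by
  refine h x x ?_ y ?_ p hp q hq
  · rw [Metric.mem_ball, dist_self]; exact dist_nonneg.trans_lt hxy
  · rwa [Metric.mem_ball, dist_comm]

lemma ContractingSet.dist_proj_le_nsmul {C R : ℝ} {A : Set X} (h : ContractingSet C A)
    (hproj : ∀ x, (projSet A x).Nonempty) (hR : 0 < R) (n : ℕ) :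
    ∀ (α : ℝ → X) (S : ℝ) (x y p q : X), IsGeodesicSegment α S x y → S ≤ (n + 1) * R →
      (∀ s ∈ Set.Icc 0 S, R < Metric.infDist (α s) A) → p ∈ projSet A x → q ∈ projSet A y →
      dist p q ≤ (n + 1) * C := by
  induction n with
  | zero =>
    intro α S x y p q hα hS hfar hp hq
    have h0 := hfar 0 ⟨le_rfl, hα.1⟩
    rw [hα.2.1] at h0
    have := h.dist_proj_le hp hq (by rw [hα.dist_eq]; push_cast at hS; linarith)
    simpa using this
  | succ n ih =>
    intro α S x y p q hα hS hfar hp hq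
    push_cast at hS ⊢
    by_cases hSR : S ≤ (n + 1) * R
    · have := ih α S x y p q hα hSR hfar hp hq
      have hC : 0 ≤ C := by
        have h0 := hfar 0 ⟨le_rfl, hα.1⟩
        rw [hα.2.1] at h0
        exact dist_nonneg.trans (h.dist_proj_le hp hp (by rw [dist_self]; linarith))
      linarith
    · have hSR' : R ≤ S := by
        have : (0:ℝ) ≤ n * R := by positivity
        nlinarith
      obtain ⟨r, hr⟩ := hproj (α R)
      have h1 : dist p r ≤ C := by
        apply h.dist_proj_le hp hr
        rw [hα.dist_left ⟨hR.le, hSR'⟩]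
        have h0 := hfar 0 ⟨le_rfl, hα.1⟩
        rwa [hα.2.1] at h0
      have h2 := ih _ _ _ _ r q (hα.sub hR.le hSR' le_rfl) (by linarith)
        (fun s hs => hfar (R + s) ⟨by linarith [hs.1], by linarith [hs.2]⟩) hr
        (by rw [hα.2.2.1]; exact hq)
      have := dist_triangle p r q
      linarith

lemma ContractingSet.dist_proj_le_of_far {C : ℝ} {A : Set X} (h : ContractingSet C A)
    (hC : 0 < C) (hproj : ∀ x, (projSet A x).Nonempty) {α : ℝ → X} {S : ℝ} {x y p q : X}
    (hα : IsGeodesicSegment α S x y)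
    (hfar : ∀ s ∈ Set.Icc 0 S, 2 * C < Metric.infDist (α s) A)
    (hp : p ∈ projSet A x) (hq : q ∈ projSet A y) : dist p q ≤ 10 * C := by
  have hx := hfar 0 ⟨le_rfl, hα.1⟩
  rw [hα.2.1, infDist_eq_of_mem_projSet hp] at hx
  have hy := hfar S ⟨hα.1, le_rfl⟩
  rw [hα.2.2.1, infDist_eq_of_mem_projSet hq] at hy
  have hxy := hα.dist_eq
  by_cases h1 : S < dist x p
  · have := h.dist_proj_le hp hq (by rw [infDist_eq_of_mem_projSet hp]; linarith)
    linarith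
  push Not at h1
  set u := dist x p - 2 * C with hu
  have huI : u ∈ Set.Icc 0 S := ⟨by linarith, by linarith⟩
  obtain ⟨r, hr⟩ := hproj (α u)
  have hpr : dist p r ≤ C := h.dist_proj_le hp hr (by
    rw [infDist_eq_of_mem_projSet hp, hα.dist_left huI]; linarith)
  by_cases h2 : S - u < dist y q
  · have hqr : dist q r ≤ C := h.dist_proj_le hq hr (by
      rw [infDist_eq_of_mem_projSet hq, dist_comm, hα.dist_right huI]; linarith)
    linarith [dist_triangle_right p q r]
  push Not at h2
  set v := S - dist y q + 2 * C with hv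
  have hvI : v ∈ Set.Icc 0 S := ⟨by linarith, by linarith⟩
  obtain ⟨r', hr'⟩ := hproj (α v)
  have hqr : dist q r' ≤ C := h.dist_proj_le hq hr' (by
    rw [infDist_eq_of_mem_projSet hq, dist_comm, hα.dist_right hvI]; linarith)
  have huv : u ≤ v := by linarith
  have hseg := hα.sub huI.1 huv hvI.2
  have hlen : v - u ≤ dist p q + 4 * C := by
    have h3 := dist_triangle4 x p q y
    rw [dist_comm q y] at h3
    linarith
  set n := ⌊(v - u) / (2 * C)⌋₊
  have hn1 : (v - u) / (2 * C) < n + 1 := Nat.lt_floor_add_one _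
  have hn2 : (n : ℝ) ≤ (v - u) / (2 * C) := Nat.floor_le (by
    apply div_nonneg <;> linarith)
  rw [div_lt_iff₀ (by linarith)] at hn1
  rw [le_div_iff₀ (by linarith)] at hn2
  have h4 := h.dist_proj_le_nsmul hproj (R := 2 * C) (by linarith) n _ _ _ _ r r' hseg hn1.le
    (fun s hs => hfar (u + s) ⟨by linarith [hs.1, huI.1], by linarith [hs.2, hvI.2]⟩) hr hr'
  have h5 := dist_triangle4 p r r' q
  rw [dist_comm r' q] at h5
  nlinarith

lemma ContractingSet.bottleneck_left {C : ℝ} {A : Set X} (h : ContractingSet C A)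
    (hC : 0 < C) (hproj : ∀ x, (projSet A x).Nonempty) {x y p q : X}
    (hp : p ∈ projSet A x) (hq : q ∈ projSet A y) (hpq : 13 * C < dist p q)
    {α : ℝ → X} {S : ℝ} (hα : IsGeodesicSegment α S x y) :
    ∃ s ∈ Set.Icc 0 S, dist (α s) p ≤ 13 * C := by
  set Z := {s ∈ Set.Icc 0 S | Metric.infDist (α s) A ≤ 2 * C} with hZ
  have hZne : Z.Nonempty := by
    by_contra hne
    rw [Set.not_nonempty_iff_eq_empty] at hne
    have := h.dist_proj_le_of_far hC hproj hα (fun s hs => by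
      by_contra hlt
      have : s ∈ Z := ⟨hs, not_lt.1 hlt⟩
      rw [hne] at this; exact this) hp hq
    linarith
  have hcont : ContinuousOn (fun s => Metric.infDist (α s) A) (Set.Icc 0 S) :=
    (Metric.continuous_infDist_pt A).comp_continuousOn hα.2.2.2.continuousOn
  have hZc : IsCompact Z := by
    have : Z = Set.Icc 0 S ∩ (fun s => Metric.infDist (α s) A) ⁻¹' Set.Iic (2 * C) := rfl
    rw [this]
    exact isCompact_Icc.of_isClosed_subset
      (hcont.preimage_isClosed_of_isClosed isClosed_Icc isClosed_Iic) Set.inter_subset_left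
  obtain ⟨u₀, ⟨hu₀I, hu₀⟩, hmin⟩ := hZc.exists_isLeast hZne
  by_cases h0 : u₀ = 0
  · refine ⟨0, ⟨le_rfl, hα.1⟩, ?_⟩
    rw [h0, hα.2.1, infDist_eq_of_mem_projSet hp] at hu₀
    rw [hα.2.1]; linarith
  have hpos : 0 < u₀ := lt_of_le_of_ne hu₀I.1 (Ne.symm h0)
  set u := max 0 (u₀ - C) with hu
  have hu0 : 0 ≤ u := le_max_left _ _
  have huC : u₀ - C ≤ u := le_max_right _ _
  have huu : u < u₀ := max_lt hpos (by linarith)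
  have huI : u ∈ Set.Icc 0 S := ⟨hu0, huu.le.trans hu₀I.2⟩
  obtain ⟨r, hr⟩ := hproj (α u)
  have h1 := h.dist_proj_le_of_far hC hproj (hα.initial hu0 huI.2) (fun s hs => by
      by_contra hlt
      have hs' : s ∈ Z := ⟨⟨hs.1, hs.2.trans huI.2⟩, not_lt.1 hlt⟩
      linarith [hmin hs', hs.2]) hp hr
  have h2 : dist (α u) r ≤ 3 * C := by
    rw [← infDist_eq_of_mem_projSet hr]
    have h3 := Metric.infDist_le_infDist_add_dist (s := A) (x := α u) (y := α u₀)
    rw [hα.2.2.2 u huI u₀ hu₀I, abs_of_pos (by linarith)] at h3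
    linarith
  refine ⟨u, huI, ?_⟩
  linarith [dist_triangle_right (α u) p r]

lemma ContractingSet.bottleneck {C : ℝ} {A : Set X} (h : ContractingSet C A)
    (hC : 0 < C) (hproj : ∀ x, (projSet A x).Nonempty) : Bottleneck (13 * C) A := by
  refine ⟨by linarith, fun x y p q hp hq hpq α S hα =>
    ⟨h.bottleneck_left hC hproj hp hq hpq hα, ?_⟩⟩
  obtain ⟨s, hs, hd⟩ := h.bottleneck_left hC hproj hq hp (by rwa [dist_comm]) hα.reverse
  exact ⟨S - s, ⟨by linarith [hs.2], by linarith [hs.1]⟩, hd⟩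

end Contracting

section Bottleneck

variable {X : Type*} [MetricSpace X]

lemma Bottleneck.dist_add_dist_le (hX : GeodesicSpace X) {D : ℝ} {A : Set X}
    (hA : Bottleneck D A) {x p z : X} (hp : p ∈ projSet A x) (hz : z ∈ A) :
    dist x p + dist p z ≤ dist x z + 2 * D := by
  have hD := hA.1
  by_cases h : D < dist p z
  · obtain ⟨α, S, hα⟩ := hX x z
    obtain ⟨s, hs, hd⟩ := (hA.2 x z p z hp (self_mem_projSet hz) h α S hα).1
    have h1 := hα.dist_left hs
    have h2 := hα.dist_right hs
    have h3 := hα.dist_eq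
    have h4 := dist_triangle x (α s) p
    have h5 := dist_triangle_left p z (α s)
    linarith
  · linarith [hp.2 z hz]

lemma Bottleneck.dist_proj_le (hX : GeodesicSpace X) {D : ℝ} {A : Set X}
    (hA : Bottleneck D A) {x y p q : X} (hp : p ∈ projSet A x) (hq : q ∈ projSet A y) :
    dist p q ≤ dist x y + 2 * D := by
  have hD := hA.1
  by_cases h : D < dist p q
  · obtain ⟨α, S, hα⟩ := hX x y
    obtain ⟨⟨s, hs, hd⟩, t, ht, hd'⟩ := hA.2 x y p q hp hq h α S hα
    have h1 := hα.2.2.2 s hs t ht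
    have h2 : |t - s| ≤ S := abs_le.2 ⟨by linarith [hs.2, ht.1], by linarith [hs.1, ht.2]⟩
    have h3 := hα.dist_eq
    have h4 := dist_triangle4 p (α s) (α t) q
    rw [dist_comm p (α s)] at h4
    linarith
  · linarith [dist_nonneg (x := x) (y := y)]

/-- Bottleneck sets are quasi-convex. -/
lemma Bottleneck.quasiconvex (hX : GeodesicSpace X) {D ε : ℝ} {A : Set X}
    (hA : Bottleneck D A) {α : ℝ → X} {S : ℝ} {x y p q r : X} (hα : IsGeodesicSegment α S x y)
    (hp : p ∈ A) (hq : q ∈ A) (hxp : dist x p ≤ ε) (hyq : dist y q ≤ ε) {s : ℝ}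
    (hs : s ∈ Set.Icc 0 S) (hr : r ∈ projSet A (α s)) : dist (α s) r ≤ 2 * D + 2 * ε := by
  have h1 := hA.dist_add_dist_le hX hr hp
  have h2 := hA.dist_add_dist_le hX hr hq
  have h3 := hα.dist_left hs
  have h4 := hα.dist_right hs
  have h5 := dist_triangle_left p q r
  have h6 := dist_triangle4 x p q y
  rw [dist_comm q y] at h6
  have h7 := dist_triangle (α s) x p
  rw [dist_comm (α s) x] at h7
  have h8 := dist_triangle (α s) y q
  have h9 := hα.dist_eq
  linarith

/-- If the projections of `x` and of `b ∈ proj_B x` to `A` differ, then `x` projects to `B` like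
the projection of `b` to `A`. -/
lemma Bottleneck.transfer (hX : GeodesicSpace X) {D : ℝ} {A B : Set X}
    (hA : Bottleneck D A) (hB : Bottleneck D B) {x p q b b' : X} (hp : p ∈ projSet A x)
    (hb : b ∈ projSet B x) (hq : q ∈ projSet A b) (hb' : b' ∈ projSet B q) (hpq : D < dist p q) :
    dist b b' ≤ 3 * D := by
  obtain ⟨α, S, hα⟩ := hX x b
  obtain ⟨s, hs, hd⟩ := (hA.2 x b p q hp hq hpq α S hα).2
  have := hB.dist_proj_le hX (mem_projSet_of_geodesic hb hα hs) hb'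
  linarith

/-- `B` projects to `A` within distance `K` of the point `a`. -/
def ProjNear (K : ℝ) (A B : Set X) (a : X) : Prop :=
  ∀ y ∈ B, ∀ q ∈ projSet A y, dist q a ≤ K

lemma Bottleneck.proj_near (hX : GeodesicSpace X) {D K : ℝ} {A B : Set X} {a b x p b' : X}
    (hA : Bottleneck D A) (hB : Bottleneck D B) (hAne : ∀ x, (projSet A x).Nonempty)
    (hBne : ∀ x, (projSet B x).Nonempty)
    (hAB : ProjNear K A B a) (hBA : ProjNear K B A b) (hp : p ∈ projSet A x)
    (hpa : K + D < dist p a) (hb' : b' ∈ projSet B x) : dist b' b ≤ K + 3 * D := by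
  obtain ⟨q, hq⟩ := hAne b'
  obtain ⟨c, hc⟩ := hBne q
  have h1 := hAB b' hb'.1 q hq
  have h2 := hBA q hq.1 c hc
  have h3 := dist_triangle p q a
  have h4 := hA.transfer hX hB hp hb' hq hc (by linarith)
  have h5 := dist_triangle b' c b
  linarith

/-- Two bottleneck sets joined by a long bridge project to each other close to its endpoints. -/
lemma Bottleneck.projNear_of_bridge (hX : GeodesicSpace X) {D K : ℝ} {A B : Set X} {a b : X}
    (hA : Bottleneck D A) (hB : Bottleneck D B) (hAne : ∀ x, (projSet A x).Nonempty)
    (hBne : ∀ x, (projSet B x).Nonempty)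
    (hab : ∀ q ∈ projSet A b, dist q a ≤ K) (hba : ∀ q ∈ projSet B a, dist q b ≤ K)
    (hfar : 5 * D + 3 * K < dist a b) : ProjNear (2 * K + 3 * D) A B a := by
  intro y hy q hq
  by_contra hcon
  push Not at hcon
  have hD := hA.1
  obtain ⟨b₁, hb₁⟩ := hBne a
  obtain ⟨q₁, hq₁⟩ := hAne b₁
  obtain ⟨q₂, hq₂⟩ := hAne b
  have h1 := hba b₁ hb₁
  have h2 := hab q₂ hq₂
  have h3 := hA.dist_proj_le hX hq₁ hq₂
  have h4 := dist_triangle q₁ q₂ a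
  have h5 := dist_triangle q q₁ a
  obtain ⟨α, S, hα⟩ := hX y b₁
  obtain ⟨s, hs, hd⟩ := (hA.2 y b₁ q q₁ hq hq₁ (by linarith) α S hα).2
  obtain ⟨r, hr⟩ := hBne (α s)
  have h6 := hB.quasiconvex hX (ε := 0) hα hy hb₁.1 (by simp) (by simp) hs hr
  have h7 := hb₁.2 r hr.1
  have h8 := dist_triangle4 a q₁ (α s) r
  rw [dist_comm a q₁, dist_comm q₁ (α s)] at h8
  have h9 := dist_triangle a b₁ b
  linarith

end Bottleneck

section Ray

variable {X : Type*} [MetricSpace X]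

lemma GeodesicOn.mono {I J : Set ℝ} {γ : ℝ → X} (h : GeodesicOn I γ) (hJ : J ⊆ I) :
    GeodesicOn J γ := fun s hs t ht => h s (hJ hs) t (hJ ht)

lemma GeodesicOn.isClosed_image {I : Set ℝ} {γ : ℝ → X} (h : GeodesicOn I γ) (hI : IsClosed I) :
    IsClosed (γ '' I) := by
  have hiso : Isometry (fun s : I => γ s) := Isometry.of_dist_eq fun s t => by
    rw [h s s.2 t t.2, Subtype.dist_eq, Real.dist_eq, abs_sub_comm]
  have := hI.completeSpace_coe
  have := hiso.isClosedEmbedding.isClosed_range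
  rwa [Set.image_eq_range]

lemma projSet_nonempty_of_isClosed [ProperSpace X] {A : Set X} (hA : IsClosed A)
    (hne : A.Nonempty) (x : X) : (projSet A x).Nonempty := by
  obtain ⟨p, hp, hd⟩ := hA.exists_infDist_eq_dist hne x
  exact ⟨p, hp, fun z hz => hd ▸ Metric.infDist_le_dist_of_mem hz⟩

/-- Geodesics between points with projections on both sides of `γ r` pass close to `γ r`. -/
lemma Bottleneck.exists_near_ray [ProperSpace X] (hX : GeodesicSpace X) {D : ℝ} {γ : ℝ → X}
    (hγ : GeodesicOn (Set.Ici 0) γ) (hA : Bottleneck D (γ '' Set.Ici 0)) {x y : X} {a b r : ℝ}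
    (ha : 0 ≤ a) (hx : γ a ∈ projSet (γ '' Set.Ici 0) x) (hy : γ b ∈ projSet (γ '' Set.Ici 0) y)
    (har : a + 3 * D < r) (hrb : r + 3 * D < b) {α : ℝ → X} {S : ℝ}
    (hα : IsGeodesicSegment α S x y) : ∃ s ∈ Set.Icc 0 S, dist (α s) (γ r) ≤ 5 * D := by
  have hD := hA.1
  have hr : 0 ≤ r := by linarith
  set A₁ := γ '' Set.Icc 0 r
  set A₂ := γ '' Set.Ici r
  have hA₁ : IsClosed A₁ := (hγ.mono Set.Icc_subset_Ici_self).isClosed_image isClosed_Icc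
  have hA₂ : IsClosed A₂ := (hγ.mono (Set.Ici_subset_Ici.2 hr)).isClosed_image isClosed_Ici
  have hne₁ : A₁.Nonempty := ⟨γ r, r, ⟨hr, le_rfl⟩, rfl⟩
  have hne₂ : A₂.Nonempty := ⟨γ r, r, Set.self_mem_Ici, rfl⟩
  have hc : ∀ A : Set X, ContinuousOn (fun s => Metric.infDist (α s) A) (Set.Icc 0 S) := fun A =>
    (Metric.continuous_infDist_pt A).comp_continuousOn hα.2.2.2.continuousOn
  have h0 : Metric.infDist (α 0) A₁ - Metric.infDist (α 0) A₂ ≤ 0 := by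
    have h1 : Metric.infDist x A₁ ≤ dist x (γ a) :=
      Metric.infDist_le_dist_of_mem ⟨a, ⟨ha, by linarith⟩, rfl⟩
    have h2 : dist x (γ a) ≤ Metric.infDist x A₂ := (Metric.le_infDist hne₂).2 fun {z} hz => by
      obtain ⟨t, ht, rfl⟩ := hz
      exact hx.2 _ ⟨t, hr.trans ht, rfl⟩
    rw [hα.2.1]; linarith
  have hS : 0 ≤ Metric.infDist (α S) A₁ - Metric.infDist (α S) A₂ := by
    have h1 : Metric.infDist y A₂ ≤ dist y (γ b) :=
      Metric.infDist_le_dist_of_mem ⟨b, (by linarith : r ≤ b), rfl⟩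
    have h2 : dist y (γ b) ≤ Metric.infDist y A₁ := (Metric.le_infDist hne₁).2 fun {z} hz => by
      obtain ⟨t, ht, rfl⟩ := hz
      exact hy.2 _ ⟨t, ht.1, rfl⟩
    rw [hα.2.2.1]; linarith
  obtain ⟨u, hu, hfu⟩ := intermediate_value_Icc hα.1 ((hc A₁).sub (hc A₂)) ⟨h0, hS⟩
  have hfu' : Metric.infDist (α u) A₁ = Metric.infDist (α u) A₂ := by
    simpa [sub_eq_zero] using hfu
  obtain ⟨_, ⟨s₁, hs₁, rfl⟩, hd₁⟩ := hA₁.exists_infDist_eq_dist hne₁ (α u)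
  obtain ⟨_, ⟨s₂, hs₂, rfl⟩, hd₂⟩ := hA₂.exists_infDist_eq_dist hne₂ (α u)
  have hmin : ∀ t, 0 ≤ t → Metric.infDist (α u) A₁ ≤ dist (α u) (γ t) := by
    intro t ht
    rcases le_total t r with h | h
    · exact Metric.infDist_le_dist_of_mem ⟨t, ⟨ht, h⟩, rfl⟩
    · rw [hfu']; exact Metric.infDist_le_dist_of_mem ⟨t, h, rfl⟩
  have hs₂r : r ≤ s₂ := hs₂
  have hp₁ : γ s₁ ∈ projSet (γ '' Set.Ici 0) (α u) :=
    ⟨⟨s₁, hs₁.1, rfl⟩, by rintro _ ⟨t, ht, rfl⟩; rw [← hd₁]; exact hmin t ht⟩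
  have hp₂ : γ s₂ ∈ projSet (γ '' Set.Ici 0) (α u) :=
    ⟨⟨s₂, hr.trans hs₂r, rfl⟩, by rintro _ ⟨t, ht, rfl⟩; rw [← hd₂, ← hfu']; exact hmin t ht⟩
  have h12 := hA.dist_proj_le hX hp₁ hp₂
  rw [dist_self, hγ s₁ hs₁.1 s₂ (hr.trans hs₂r), abs_of_nonneg (by linarith [hs₁.2])] at h12
  have hb0 : (0:ℝ) ≤ b := by linarith
  obtain ⟨u₁, hu₁, hdu₁⟩ := (hA.2 x (α u) (γ a) (γ s₁) hx hp₁ (by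
    rw [hγ a ha s₁ hs₁.1]; exact lt_of_lt_of_le (by linarith) (le_abs_self _)) α u
    (hα.initial hu.1 hu.2)).2
  obtain ⟨u₂, hu₂, hdu₂⟩ := (hA.2 (α u) (α S) (γ s₁) (γ b) hp₁ (by rwa [hα.2.2.1]) (by
    rw [hγ s₁ hs₁.1 b hb0]
    exact lt_of_lt_of_le (by linarith [hs₁.2]) (le_abs_self _)) _ _
    (hα.sub hu.1 hu.2 le_rfl)).1
  have h3 := hα.2.2.2 u₁ ⟨hu₁.1, hu₁.2.trans hu.2⟩ (u + u₂) ⟨by linarith [hu.1, hu₂.1], by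
    linarith [hu₂.2]⟩
  rw [abs_of_nonneg (by linarith [hu₁.2, hu₂.1])] at h3
  have h4 := dist_triangle_right (α u₁) (α (u + u₂)) (γ s₁)
  have h5 := hα.2.2.2 u₁ ⟨hu₁.1, hu₁.2.trans hu.2⟩ u hu
  rw [abs_of_nonneg (by linarith [hu₁.2]), dist_comm] at h5
  refine ⟨u, hu, ?_⟩
  have h6 := dist_triangle4 (α u) (α u₁) (γ s₁) (γ r)
  rw [hγ s₁ hs₁.1 r hr, abs_of_nonneg (by linarith [hs₁.2])] at h6
  linarith [hu₂.1]

end Ray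

section Smul

variable {G X : Type*} [Group G] [MetricSpace X] [MulAction G X] [IsIsometricSMul G X]

lemma IsGeodesicSegment.smul (g : G) {γ : ℝ → X} {T : ℝ} {x y : X}
    (h : IsGeodesicSegment γ T x y) : IsGeodesicSegment (fun t => g • γ t) T (g • x) (g • y) :=
  ⟨h.1, by rw [← h.2.1], by rw [← h.2.2.1], fun s hs t ht => by
    rw [dist_smul]; exact h.2.2.2 s hs t ht⟩

lemma smul_mem_projSet (g : G) {A B : Set X} (hAB : ∀ z, z ∈ A ↔ g • z ∈ B) {x p : X} :
    g • p ∈ projSet B (g • x) ↔ p ∈ projSet A x := by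
  refine and_congr (hAB p).symm ⟨fun h z hz => ?_, fun h z hz => ?_⟩
  · have := h (g • z) ((hAB z).1 hz)
    rwa [dist_smul, dist_smul] at this
  · have := h (g⁻¹ • z) ((hAB _).2 (by rwa [smul_inv_smul]))
    rwa [← dist_smul g x, ← dist_smul g x, smul_inv_smul] at this

lemma Bottleneck.smul (g : G) {D : ℝ} {A B : Set X} (hAB : ∀ z, z ∈ A ↔ g • z ∈ B)
    (h : Bottleneck D A) : Bottleneck D B := by
  refine ⟨h.1, fun x y p q hp hq hpq α S hα => ?_⟩
  have e : ∀ z : X, g • g⁻¹ • z = z := smul_inv_smul g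
  have hp' : g⁻¹ • p ∈ projSet A (g⁻¹ • x) := by
    rw [← smul_mem_projSet g hAB, e, e]; exact hp
  have hq' : g⁻¹ • q ∈ projSet A (g⁻¹ • y) := by
    rw [← smul_mem_projSet g hAB, e, e]; exact hq
  have := h.2 _ _ _ _ hp' hq' (by rwa [dist_smul]) _ _ (hα.smul g⁻¹)
  simpa only [dist_smul] using this

end Smul

section Line

/-- The translate by `g` of the orbit of `x₀` under the powers of `w`. -/
def line {G X : Type*} [Group G] [MulAction G X] (w : G) (x₀ : X) (g : G) : Set X :=
  Set.range fun k : ℤ => (g * w ^ k) • x₀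

lemma smul_mem_line {G X : Type*} [Group G] [MulAction G X] {w : G} {x₀ : X} (g h : G) (z : X) :
    z ∈ line w x₀ h ↔ g • z ∈ line w x₀ (g * h) := by
  constructor
  · rintro ⟨k, rfl⟩; exact ⟨k, by simp only [mul_smul]⟩
  · rintro ⟨k, hk⟩
    refine ⟨k, ?_⟩
    simp only [mul_smul] at hk ⊢
    exact smul_left_cancel g hk

lemma line_mul_zpow {G X : Type*} [Group G] [MulAction G X] {w : G} {x₀ : X} (g : G) (k : ℤ) :
    line w x₀ (g * w ^ k) = line w x₀ g := by
  ext z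
  constructor
  · rintro ⟨l, rfl⟩; exact ⟨k + l, by simp [zpow_add, mul_assoc]⟩
  · rintro ⟨l, rfl⟩; exact ⟨-k + l, by simp [zpow_add, mul_assoc]⟩

lemma Bottleneck.line {G X : Type*} [Group G] [MetricSpace X] [MulAction G X]
    [IsIsometricSMul G X] {w : G} {x₀ : X} {D : ℝ} (h : Bottleneck D (line w x₀ 1)) (g : G) :
    Bottleneck D (MorseLTG.line w x₀ g) :=
  h.smul g fun z => by simpa using smul_mem_line (w := w) (x₀ := x₀) g 1 z

variable {G X : Type*} [Group G] [MetricSpace X] [MulAction G X] [IsIsometricSMul G X]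
  {w : G} {x₀ : X}

lemma dist_zpow_zpow (w : G) (x₀ : X) (a b : ℤ) :
    dist ((w ^ a) • x₀) ((w ^ b) • x₀) = dist x₀ ((w ^ (b - a)) • x₀) := by
  rw [← dist_smul (w ^ a) x₀, ← mul_smul, ← zpow_add, add_sub_cancel]

lemma smul_mem_projSet_line (g h : G) {x p : X} :
    g • p ∈ projSet (line w x₀ (g * h)) (g • x) ↔ p ∈ projSet (line w x₀ h) x :=
  smul_mem_projSet g (smul_mem_line g h)

lemma ProjNear.smul {K : ℝ} {g h : G} {a : X} (k : G)
    (H : ProjNear K (line w x₀ g) (line w x₀ h) a) :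
    ProjNear K (line w x₀ (k * g)) (line w x₀ (k * h)) (k • a) := by
  intro y hy q hq
  have hy' : k⁻¹ • y ∈ line w x₀ h := by rw [smul_mem_line k, smul_inv_smul]; exact hy
  have hq' : k⁻¹ • q ∈ projSet (line w x₀ g) (k⁻¹ • y) := by
    rw [← smul_mem_projSet_line k, smul_inv_smul, smul_inv_smul]; exact hq
  have := H _ hy' _ hq'
  rwa [← dist_smul k, smul_inv_smul] at this

end Line

section Axis

lemma inv_zpow_succ_smul {G X : Type*} [Group G] [MulAction G X] (w : G) (k : ℤ) (x : X) :
    (w ^ (k + 1))⁻¹ • x = w⁻¹ • (w ^ k)⁻¹ • x := by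
  rw [zpow_add_one, mul_inv_rev, mul_smul]

variable {G X : Type*} [Group G] [MetricSpace X] [MulAction G X] [IsIsometricSMul G X]

lemma dist_zpow_smul_le (w : G) (x₀ : X) (m : ℕ) (a : ℤ) :
    dist ((w ^ a) • x₀) ((w ^ (a + m)) • x₀) ≤ m * dist x₀ (w • x₀) := by
  induction m with
  | zero => simp
  | succ m ih =>
    have h5 := dist_triangle ((w ^ a) • x₀) ((w ^ (a + m)) • x₀) ((w ^ (a + (m + 1 : ℕ))) • x₀)
    have h6 : dist ((w ^ (a + m)) • x₀) ((w ^ (a + (m + 1 : ℕ))) • x₀) = dist x₀ (w • x₀) := by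
      push_cast
      rw [← add_assoc, zpow_add_one, mul_smul, dist_smul]
    push_cast at *
    linarith

lemma dist_ray_bounds (hX : GeodesicSpace X) {D : ℝ} {γ : ℝ → X}
    (hγ : GeodesicOn (Set.Ici 0) γ) (hA : Bottleneck D (γ '' Set.Ici 0)) {x : X} {t s : ℝ}
    (ht : 0 ≤ t) (hp : γ t ∈ projSet (γ '' Set.Ici 0) x) (hs : 0 ≤ s) :
    dist x (γ t) + |s - t| ≤ dist x (γ s) + 2 * D ∧
      dist x (γ s) ≤ dist x (γ t) + |s - t| := by
  have h1 := hA.dist_add_dist_le hX hp ⟨s, hs, rfl⟩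
  have h2 := dist_triangle x (γ t) (γ s)
  rw [hγ t ht s hs] at h1 h2
  exact ⟨h1, h2⟩

/-- A bottleneck ray `γ` near `x₀` at time `n`, which the element `w` carries near itself with
time shift `n' - n` on a window of radius `L` around `n`. The function `t` gives the time of a
projection to the ray. -/
structure RecurrentRay (w : G) (x₀ : X) (γ : ℝ → X) (t : X → ℝ) (D R L n n' : ℝ) : Prop where
  geodesic : GeodesicOn (Set.Ici 0) γ
  bottleneck : Bottleneck D (γ '' Set.Ici 0)
  t_nonneg : ∀ x, 0 ≤ t x
  proj : ∀ x, γ (t x) ∈ projSet (γ '' Set.Ici 0) x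
  R_nonneg : 0 ≤ R
  window : 8 * D + 4 * R < L
  L_le : L ≤ n
  n_add_le : n + 3 * L ≤ n'
  near : dist x₀ (γ n) ≤ R
  near' : dist (w • x₀) (γ n') ≤ R
  shift_left : dist (w • γ (n - L)) (γ (n' - L)) ≤ 2 * R
  shift_right : dist (w • γ (n + L)) (γ (n' + L)) ≤ 2 * R

namespace RecurrentRay

variable {w : G} {x₀ : X} {γ : ℝ → X} {t : X → ℝ} {D R L n n' : ℝ}

lemma shift_bounds (h : RecurrentRay w x₀ γ t D R L n n') (x : X) :
    |dist (w⁻¹ • x) (γ (n - L)) - dist x (γ (n' - L))| ≤ 2 * R ∧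
      |dist (w⁻¹ • x) (γ (n + L)) - dist x (γ (n' + L))| ≤ 2 * R := by
  have e : ∀ z, dist (w⁻¹ • x) z = dist x (w • z) := fun z => by
    rw [← dist_smul w, smul_inv_smul]
  rw [e, e]
  constructor
  · exact (abs_dist_sub_le _ _ x |>.trans_eq' (by simp only [dist_comm x])).trans h.shift_left
  · exact (abs_dist_sub_le _ _ x |>.trans_eq' (by simp only [dist_comm x])).trans h.shift_right

lemma forward (hX : GeodesicSpace X) (h : RecurrentRay w x₀ γ t D R L n n') {x : X}
    (hx : t x ≤ n' - L) : t (w⁻¹ • x) ≤ n - L + (2 * D + 2 * R) := by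
  have hD := h.bottleneck.1
  have h1 := h.window
  have h2 := h.L_le
  have h3 := h.n_add_le
  have h4 := h.R_nonneg
  obtain ⟨hl, hr⟩ := h.shift_bounds x
  rw [abs_le] at hl hr
  have a1 := (dist_ray_bounds hX h.geodesic h.bottleneck (h.t_nonneg x) (h.proj x)
    (s := n' + L) (by linarith)).1
  have a2 := (dist_ray_bounds hX h.geodesic h.bottleneck (h.t_nonneg x) (h.proj x)
    (s := n' - L) (by linarith)).2
  have b1 := (dist_ray_bounds hX h.geodesic h.bottleneck (h.t_nonneg _) (h.proj (w⁻¹ • x))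
    (s := n + L) (by linarith)).2
  have b2 := (dist_ray_bounds hX h.geodesic h.bottleneck (h.t_nonneg _) (h.proj (w⁻¹ • x))
    (s := n - L) (by linarith)).1
  rw [abs_of_nonneg (by linarith)] at a1 a2
  by_contra hcon
  push Not at hcon
  rw [abs_of_neg (by linarith)] at b2
  rcases abs_cases (n + L - t (w⁻¹ • x)) with ⟨e, _⟩ | ⟨e, _⟩ <;> rw [e] at b1 <;> linarith

lemma backward (hX : GeodesicSpace X) (h : RecurrentRay w x₀ γ t D R L n n') {x : X}
    (hx : n + L ≤ t (w⁻¹ • x)) : n' + L - (2 * D + 2 * R) ≤ t x := by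
  have hD := h.bottleneck.1
  have h1 := h.window
  have h2 := h.L_le
  have h3 := h.n_add_le
  have h4 := h.R_nonneg
  obtain ⟨hl, hr⟩ := h.shift_bounds x
  rw [abs_le] at hl hr
  have a1 := (dist_ray_bounds hX h.geodesic h.bottleneck (h.t_nonneg x) (h.proj x)
    (s := n' + L) (by linarith)).1
  have a2 := (dist_ray_bounds hX h.geodesic h.bottleneck (h.t_nonneg x) (h.proj x)
    (s := n' - L) (by linarith)).2
  have b1 := (dist_ray_bounds hX h.geodesic h.bottleneck (h.t_nonneg _) (h.proj (w⁻¹ • x))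
    (s := n + L) (by linarith)).2
  have b2 := (dist_ray_bounds hX h.geodesic h.bottleneck (h.t_nonneg _) (h.proj (w⁻¹ • x))
    (s := n - L) (by linarith)).1
  rw [abs_of_nonpos (by linarith)] at b1 b2
  by_contra hcon
  push Not at hcon
  rw [abs_of_pos (by linarith)] at a1
  rcases abs_cases (n' - L - t x) with ⟨e, _⟩ | ⟨e, _⟩ <;> rw [e] at a2 <;> linarith

lemma forward_lt (hX : GeodesicSpace X) (h : RecurrentRay w x₀ γ t D R L n n') {x : X} {k : ℤ}
    (hx : t ((w ^ k)⁻¹ • x) ≤ n' - L) {l : ℤ} (hkl : k < l) :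
    t ((w ^ l)⁻¹ • x) ≤ n - L + (2 * D + 2 * R) := by
  have h1 := h.window
  have h3 := h.n_add_le
  have h4 := h.R_nonneg
  have hD := h.bottleneck.1
  induction l, (show k + 1 ≤ l from hkl) using Int.leInduction with
  | base => rw [inv_zpow_succ_smul]; exact h.forward hX hx
  | succ l hl ih =>
    rw [inv_zpow_succ_smul]
    exact h.forward hX ((ih (by omega)).trans (by linarith))

lemma backward_lt (hX : GeodesicSpace X) (h : RecurrentRay w x₀ γ t D R L n n') {x : X} {l : ℤ}
    (hx : n + L ≤ t ((w ^ l)⁻¹ • x)) {k : ℤ} (hkl : k < l) :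
    n' + L - (2 * D + 2 * R) ≤ t ((w ^ k)⁻¹ • x) := by
  by_contra hcon
  push Not at hcon
  have h1 := h.window
  have h3 := h.n_add_le
  have h4 := h.R_nonneg
  have hD := h.bottleneck.1
  induction l, (show k + 1 ≤ l from hkl) using Int.leInduction with
  | base =>
    rw [inv_zpow_succ_smul] at hx
    linarith [h.backward hX hx]
  | succ l hl ih =>
    rw [inv_zpow_succ_smul] at hx
    have := h.backward hX hx
    exact ih (by linarith) (by omega)

lemma zpow_ne_one (hX : GeodesicSpace X) (h : RecurrentRay w x₀ γ t D R L n n') {k : ℤ}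
    (hk : 0 < k) : w ^ k ≠ 1 := by
  intro hw
  have h1 := h.window
  have h2 := h.L_le
  have h3 := h.n_add_le
  have h4 := h.R_nonneg
  have hD := h.bottleneck.1
  have h5 := h.near
  have h6 := (dist_ray_bounds hX h.geodesic h.bottleneck (h.t_nonneg x₀) (h.proj x₀)
    (s := n) (by linarith)).1
  have h7 := abs_le.1 (show |n - t x₀| ≤ R + 2 * D by
    linarith [dist_nonneg (x := x₀) (y := γ (t x₀))])
  have h8 := h.forward_lt hX (x := x₀) (k := 0) (by simp; linarith) hk
  rw [hw, inv_one, one_smul] at h8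
  linarith

/-- If `w ^ a • x₀` is a point of the orbit closest to `x`, then `x` projects to the `k`-th
translate of the ray before the end of its window for `k > a`. -/
lemma le_of_nearest (hX : GeodesicSpace X) (h : RecurrentRay w x₀ γ t D R L n n') {x : X} {a : ℤ}
    (ha : ∀ b : ℤ, dist x ((w ^ a) • x₀) ≤ dist x ((w ^ b) • x₀)) {k : ℤ} (hk : a < k) :
    t ((w ^ k)⁻¹ • x) ≤ n' - L := by
  by_contra hcon
  push Not at hcon
  have h1 := h.window
  have h2 := h.L_le
  have h3 := h.n_add_le
  have h4 := h.R_nonneg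
  have hD := h.bottleneck.1
  have h5 := h.backward_lt hX (x := x) (l := k) (by linarith) hk
  have h6 := ha (a + 1)
  rw [zpow_add_one, mul_smul] at h6
  set x' := (w ^ a)⁻¹ • x with hx'
  have hx : x = (w ^ a) • x' := by rw [hx', smul_inv_smul]
  rw [hx, dist_smul, dist_smul] at h6
  have b1 := (dist_ray_bounds hX h.geodesic h.bottleneck (h.t_nonneg x') (h.proj x')
    (s := n) (by linarith)).1
  have b2 := (dist_ray_bounds hX h.geodesic h.bottleneck (h.t_nonneg x') (h.proj x')
    (s := n') (by linarith)).2
  rw [abs_of_nonpos (by linarith)] at b1 b2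
  have c1 := dist_triangle x' x₀ (γ n)
  have c2 := dist_triangle_right x' (w • x₀) (γ n')
  linarith [h.near, h.near']

lemma ge_of_nearest (hX : GeodesicSpace X) (h : RecurrentRay w x₀ γ t D R L n n') {x : X} {a : ℤ}
    (ha : ∀ b : ℤ, dist x ((w ^ a) • x₀) ≤ dist x ((w ^ b) • x₀)) {k : ℤ} (hk : k + 2 ≤ a) :
    n + L ≤ t ((w ^ k)⁻¹ • x) := by
  by_contra hcon
  push Not at hcon
  have h1 := h.window
  have h2 := h.L_le
  have h3 := h.n_add_le
  have h4 := h.R_nonneg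
  have hD := h.bottleneck.1
  have h5 := h.forward_lt hX (x := x) (k := k) (l := a - 1) (by linarith) (by omega)
  have h6 := ha (a - 1)
  have hwa : w ^ a = w ^ (a - 1) * w := by rw [← zpow_add_one]; simp
  rw [hwa, mul_smul] at h6
  set x' := (w ^ (a - 1))⁻¹ • x with hx'
  have hx : x = (w ^ (a - 1)) • x' := by rw [hx', smul_inv_smul]
  rw [hx, dist_smul, dist_smul] at h6
  have b1 := (dist_ray_bounds hX h.geodesic h.bottleneck (h.t_nonneg x') (h.proj x')
    (s := n) (by linarith)).2
  have b2 := (dist_ray_bounds hX h.geodesic h.bottleneck (h.t_nonneg x') (h.proj x')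
    (s := n') (by linarith)).1
  rw [abs_of_nonneg (by linarith)] at b1 b2
  have c1 := dist_triangle_right x' x₀ (γ n)
  have c2 := dist_triangle x' (w • x₀) (γ n')
  linarith [h.near, h.near']

lemma exists_near_zpow [ProperSpace X] (hX : GeodesicSpace X)
    (h : RecurrentRay w x₀ γ t D R L n n') {x y : X} {a b : ℤ}
    (ha : ∀ c : ℤ, dist x ((w ^ a) • x₀) ≤ dist x ((w ^ c) • x₀))
    (hb : ∀ c : ℤ, dist y ((w ^ b) • x₀) ≤ dist y ((w ^ c) • x₀)) {k : ℤ} (hak : a + 2 ≤ k)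
    (hkb : k + 2 ≤ b) {α : ℝ → X} {S : ℝ} (hα : IsGeodesicSegment α S x y) :
    ∃ s ∈ Set.Icc 0 S, dist (α s) ((w ^ k) • x₀) ≤ 5 * D + R := by
  have h1 := h.window
  have h4 := h.R_nonneg
  have hD := h.bottleneck.1
  have hx := h.forward_lt hX (h.le_of_nearest hX ha (lt_add_one a)) (l := k) (by omega)
  have hy := h.ge_of_nearest hX hb hkb
  obtain ⟨s, hs, hd⟩ := h.bottleneck.exists_near_ray hX h.geodesic (h.t_nonneg _) (h.proj _)
    (h.proj _) (r := n) (by linarith) (by linarith) (hα.smul (w ^ k)⁻¹)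
  refine ⟨s, hs, ?_⟩
  have : dist (α s) (w ^ k • x₀) = dist ((w ^ k)⁻¹ • α s) x₀ := by
    rw [← dist_smul (w ^ k) _ x₀, smul_inv_smul]
  rw [this]
  linarith [dist_triangle_right ((w ^ k)⁻¹ • α s) x₀ (γ n), h.near]

lemma bottleneck_line [ProperSpace X] (hX : GeodesicSpace X)
    (h : RecurrentRay w x₀ γ t D R L n n') :
    Bottleneck (5 * D + R + 3 * dist x₀ (w • x₀)) (line w x₀ 1) := by
  have h4 := h.R_nonneg
  have hD := h.bottleneck.1
  have hnear : ∀ (x : X) (a : ℤ), ((1 * w ^ a) • x₀) ∈ projSet (line w x₀ 1) x →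
      ∀ c : ℤ, dist x ((w ^ a) • x₀) ≤ dist x ((w ^ c) • x₀) := by
    intro x a hx c
    have := hx.2 _ ⟨c, rfl⟩
    simpa using this
  have key : ∀ (x y : X) (a b : ℤ), ((1 * w ^ a) • x₀) ∈ projSet (line w x₀ 1) x →
      ((1 * w ^ b) • x₀) ∈ projSet (line w x₀ 1) y → a ≤ b →
      5 * D + R + 3 * dist x₀ (w • x₀) < dist ((w ^ a) • x₀) ((w ^ b) • x₀) →
      ∀ (α : ℝ → X) (S : ℝ), IsGeodesicSegment α S x y →
      (∃ s ∈ Set.Icc 0 S, dist (α s) ((1 * w ^ a) • x₀) ≤ 5 * D + R + 3 * dist x₀ (w • x₀)) ∧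
      (∃ s ∈ Set.Icc 0 S, dist (α s) ((1 * w ^ b) • x₀) ≤ 5 * D + R + 3 * dist x₀ (w • x₀)) := by
    intro x y a b hx hy hab hd α S hα
    have hnn : 0 ≤ dist x₀ (w • x₀) := dist_nonneg
    have hab4 : a + 4 ≤ b := by
      by_contra hcon
      obtain ⟨m, rfl⟩ : ∃ m : ℕ, b = a + m := ⟨(b - a).toNat, by omega⟩
      have h5 := dist_zpow_smul_le w x₀ m a
      have h6 : (m : ℝ) ≤ 3 := by exact_mod_cast (show m ≤ 3 by omega)
      nlinarith
    obtain ⟨s, hs, hds⟩ := h.exists_near_zpow hX (hnear x a hx) (hnear y b hy) (k := a + 2)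
      le_rfl (by omega) hα
    obtain ⟨s', hs', hds'⟩ := h.exists_near_zpow hX (hnear x a hx) (hnear y b hy) (k := b - 2)
      (by omega) (by omega) hα
    refine ⟨⟨s, hs, ?_⟩, ⟨s', hs', ?_⟩⟩
    · have := dist_zpow_smul_le w x₀ 2 a
      rw [one_mul]
      push_cast at this
      linarith [dist_triangle_right (α s) ((w ^ a) • x₀) ((w ^ (a + 2)) • x₀)]
    · have := dist_zpow_smul_le w x₀ 2 (b - 2)
      rw [one_mul]
      push_cast at this
      rw [sub_add_cancel] at this
      linarith [dist_triangle (α s') ((w ^ (b - 2)) • x₀) ((w ^ b) • x₀)]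
  refine ⟨by positivity, ?_⟩
  intro x y p q hp hq hpq α S hα
  obtain ⟨a, rfl⟩ := hp.1
  obtain ⟨b, rfl⟩ := hq.1
  simp only [] at hp hq hpq ⊢
  rcases le_total a b with hab | hab
  · exact key x y a b hp hq hab (by simpa using hpq) α S hα
  · obtain ⟨⟨s, hs, hd⟩, s', hs', hd'⟩ := key y x b a hq hp hab
      (by rw [dist_comm (w ^ b • x₀)]; simpa using hpq) _ S hα.reverse
    exact ⟨⟨S - s', ⟨by linarith [hs'.2], by linarith [hs'.1]⟩, hd'⟩,
      ⟨S - s, ⟨by linarith [hs.2], by linarith [hs.1]⟩, hd⟩⟩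

end RecurrentRay

end Axis

section Action

variable {G X : Type*} [Group G] [MetricSpace X] [MulAction G X]

lemma finite_setOf_dist_smul_le [ProperSpace X] [ProperlyDiscontinuousSMul G X] (x₀ y : X)
    (r : ℝ) : {g : G | dist (g • x₀) y ≤ r}.Finite := by
  refine (ProperlyDiscontinuousSMul.finite_disjoint_inter_image (Γ := G)
    (isCompact_singleton (x := x₀)) (isCompact_closedBall y r)).subset fun g hg => ?_
  exact ⟨g • x₀, ⟨x₀, rfl, rfl⟩, hg⟩

lemma exists_coarsely_dense [IsIsometricSMul G X] (x₀ : X) {K : Set X} (hK : IsCompact K)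
    (hcov : ∀ y : X, ∃ g : G, ∃ k ∈ K, g • k = y) :
    ∃ R : ℝ, 0 ≤ R ∧ ∀ y : X, ∃ g : G, dist y (g • x₀) ≤ R := by
  obtain ⟨R, hR⟩ := hK.isBounded.subset_closedBall x₀
  refine ⟨max R 0, le_max_right _ _, fun y => ?_⟩
  obtain ⟨g, k, hk, rfl⟩ := hcov y
  exact ⟨g, by rw [dist_smul]; exact (hR hk).trans (le_max_left _ _)⟩

lemma projSet_line_nonempty [ProperSpace X] [ProperlyDiscontinuousSMul G X] (w : G) (x₀ : X)
    (g : G) (x : X) : (projSet (line w x₀ g) x).Nonempty := by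
  set S := line w x₀ g ∩ Metric.closedBall x (dist x (g • x₀))
  have hfin : S.Finite := by
    refine ((finite_setOf_dist_smul_le (G := G) x₀ x (dist x (g • x₀))).image
      fun h => h • x₀).subset ?_
    rintro _ ⟨⟨k, rfl⟩, hk⟩
    exact ⟨g * w ^ k, hk, rfl⟩
  have hmem : g • x₀ ∈ line w x₀ g := ⟨0, by simp⟩
  obtain ⟨p, hp, hmin⟩ := Set.exists_min_image S (fun z => dist x z) hfin
    ⟨g • x₀, hmem, by simp [dist_comm]⟩
  refine ⟨p, hp.1, fun z hz => ?_⟩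
  by_cases h : dist x z ≤ dist x (g • x₀)
  · exact hmin z ⟨hz, by rwa [Metric.mem_closedBall, dist_comm]⟩
  · push Not at h
    have := hp.2
    rw [Metric.mem_closedBall, dist_comm] at this
    linarith

/-- A cocompact group with a bottleneck ray has an element of infinite order with a bottleneck
orbit. -/
lemma exists_bottleneck_line [ProperSpace X] [ProperlyDiscontinuousSMul G X]
    [IsIsometricSMul G X] (hX : GeodesicSpace X) (x₀ : X) {R : ℝ} (hR : 0 ≤ R)
    (hdense : ∀ y : X, ∃ g : G, dist y (g • x₀) ≤ R) {γ : ℝ → X} {D : ℝ}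
    (hγ : GeodesicOn (Set.Ici 0) γ) (hA : Bottleneck D (γ '' Set.Ici 0)) :
    ∃ (w : G) (D' : ℝ), Bottleneck D' (line w x₀ 1) ∧ ∀ k : ℤ, k ≠ 0 → w ^ k ≠ 1 := by
  have hD := hA.1
  choose g hg using fun s : ℝ => hdense (γ s)
  set L : ℝ := 8 * D + 4 * R + 1 with hL
  have hL0 : 0 < L := by positivity
  set F := {h : G | dist (h • x₀) x₀ ≤ 2 * R + L}
  have hF : F.Finite := finite_setOf_dist_smul_le x₀ x₀ _
  let N : ℕ → ℝ := fun j => 3 * L * (j + 1)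
  have hN : ∀ j, L ≤ N j := fun j => by
    have : (0:ℝ) ≤ 3 * L * j := by positivity
    simp only [N]; linarith
  have hmemF : ∀ s s' : ℝ, 0 ≤ s → 0 ≤ s' → |s' - s| ≤ L → (g s)⁻¹ * g s' ∈ F := by
    intro s s' hs hs' hss
    have h1 : dist (((g s)⁻¹ * g s') • x₀) x₀ = dist (g s • x₀) (g s' • x₀) := by
      rw [← dist_smul (g s), mul_smul, smul_inv_smul, dist_comm]
    have h2 := dist_triangle4 (g s • x₀) (γ s) (γ s') (g s' • x₀)
    rw [hγ s hs s' hs', dist_comm (g s • x₀) (γ s)] at h2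
    show dist (((g s)⁻¹ * g s') • x₀) x₀ ≤ 2 * R + L
    linarith [hg s, hg s']
  obtain ⟨i, j, hij, hij1, hij2⟩ : ∃ i j : ℕ, i < j ∧
      (g (N i))⁻¹ * g (N i - L) = (g (N j))⁻¹ * g (N j - L) ∧
      (g (N i))⁻¹ * g (N i + L) = (g (N j))⁻¹ * g (N j + L) := by
    obtain ⟨i, -, j, -, hne, heq⟩ := Set.infinite_univ.exists_ne_map_eq_of_mapsTo
      (f := fun j : ℕ => ((g (N j))⁻¹ * g (N j - L), (g (N j))⁻¹ * g (N j + L)))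
      (t := F ×ˢ F) (fun j _ => by
        have := hN j
        refine ⟨hmemF _ _ (by linarith) (by linarith) ?_, hmemF _ _ (by linarith) (by linarith) ?_⟩
        · rw [show N j - L - N j = -L by ring, abs_neg, abs_of_pos hL0]
        · rw [show N j + L - N j = L by ring, abs_of_pos hL0])
      (hF.prod hF)
    simp only [Prod.mk.injEq] at heq
    rcases lt_or_gt_of_ne hne with h | h
    · exact ⟨i, j, h, heq.1, heq.2⟩
    · exact ⟨j, i, h, heq.1.symm, heq.2.symm⟩
  set n := N i with hn
  set n' := N j with hn'
  have hnn' : n + 3 * L ≤ n' := by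
    have : (i : ℝ) + 1 ≤ j := by exact_mod_cast hij
    simp only [hn, hn', N]
    nlinarith
  have hnL := hN i
  set γ' : ℝ → X := fun s => (g n)⁻¹ • γ s with hγ'
  have hγ'g : GeodesicOn (Set.Ici 0) γ' := fun s hs t ht => by
    simp only [hγ', dist_smul]; exact hγ s hs t ht
  have hA' : Bottleneck D (γ' '' Set.Ici 0) := by
    refine hA.smul (g n)⁻¹ fun z => ⟨?_, ?_⟩
    · rintro ⟨s, hs, rfl⟩; exact ⟨s, hs, rfl⟩
    · rintro ⟨s, hs, h⟩; exact ⟨s, hs, smul_left_cancel _ h⟩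
  have hproj : ∀ x, ∃ t, 0 ≤ t ∧ γ' t ∈ projSet (γ' '' Set.Ici 0) x := by
    intro x
    obtain ⟨p, hp⟩ := projSet_nonempty_of_isClosed (hγ'g.isClosed_image isClosed_Ici)
      ⟨γ' 0, 0, Set.self_mem_Ici, rfl⟩ x
    obtain ⟨t, ht, rfl⟩ := hp.1
    exact ⟨t, ht, hp⟩
  choose t ht0 ht using hproj
  have hshift : ∀ s s', (g n)⁻¹ * g s = (g n')⁻¹ * g s' →
      dist (((g n)⁻¹ * g n') • γ' s) (γ' s') ≤ 2 * R := by
    intro s s' he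
    have h1 : dist (((g n)⁻¹ * g n') • γ' s) (γ' s') =
        dist (γ s) ((g n * (g n')⁻¹) • γ s') := by
      simp only [hγ', ← mul_smul]
      rw [← dist_smul (g n * (g n')⁻¹ * g n), ← mul_smul, ← mul_smul]
      congr 2 <;> group
      rw [one_smul]
    have h2 : (g n * (g n')⁻¹) • g s' • x₀ = g s • x₀ := by
      rw [← mul_smul, mul_assoc, ← he]; simp
    have h3 := dist_triangle_right (γ s) ((g n * (g n')⁻¹) • γ s') (g s • x₀)
    rw [← h2, dist_smul, h2] at h3
    rw [h1]
    linarith [hg s, hg s']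
  have hrec : RecurrentRay ((g n)⁻¹ * g n') x₀ γ' t D R L n n' :=
    { geodesic := hγ'g
      bottleneck := hA'
      t_nonneg := ht0
      proj := ht
      R_nonneg := hR
      window := by linarith
      L_le := hnL
      n_add_le := hnn'
      near := by
        simp only [hγ']
        rw [← dist_smul (g n), smul_inv_smul, dist_comm]; exact hg n
      near' := by
        simp only [hγ']
        rw [mul_smul, dist_smul, dist_comm]; exact hg n'
      shift_left := hshift _ _ hij1
      shift_right := hshift _ _ hij2 }
  refine ⟨_, _, hrec.bottleneck_line hX, fun k hk => ?_⟩
  rcases lt_or_gt_of_ne hk with h | h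
  · intro h1
    refine hrec.zpow_ne_one hX (k := -k) (by omega) ?_
    rw [zpow_neg, h1, inv_one]
  · exact hrec.zpow_ne_one hX h

end Action

section Orbit

variable {G X : Type*} [Group G] [MetricSpace X] [MulAction G X] [ProperSpace X]
  [ProperlyDiscontinuousSMul G X] {w : G}

lemma zpow_injective_of_ne_one {G : Type*} [Group G] {w : G} (hw : ∀ k : ℤ, k ≠ 0 → w ^ k ≠ 1) :
    Function.Injective fun k : ℤ => w ^ k := by
  intro a b hab
  by_contra hne
  refine hw (a - b) (by omega) ?_
  simp only at hab
  rw [zpow_sub, hab, mul_inv_cancel]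

lemma exists_natAbs_le_of_dist_le (hw : ∀ k : ℤ, k ≠ 0 → w ^ k ≠ 1) (x₀ : X) (r : ℝ) :
    ∃ B : ℕ, ∀ k : ℤ, dist x₀ ((w ^ k) • x₀) ≤ r → k.natAbs ≤ B := by
  have hfin : {k : ℤ | dist x₀ ((w ^ k) • x₀) ≤ r}.Finite := by
    refine ((finite_setOf_dist_smul_le (G := G) x₀ x₀ r).preimage
      ((zpow_injective_of_ne_one hw).injOn)).subset fun k hk => ?_
    simpa [dist_comm] using hk
  refine ⟨hfin.toFinset.sup Int.natAbs, fun k hk => ?_⟩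
  exact Finset.le_sup (f := Int.natAbs) (hfin.mem_toFinset.2 hk)

lemma exists_lt_dist_zpow (hw : ∀ k : ℤ, k ≠ 0 → w ^ k ≠ 1) (x₀ : X) (r : ℝ) :
    ∃ n : ℕ, ∀ k : ℤ, n ≤ k.natAbs → r < dist x₀ ((w ^ k) • x₀) := by
  obtain ⟨B, hB⟩ := exists_natAbs_le_of_dist_le hw x₀ r
  refine ⟨B + 1, fun k hk => ?_⟩
  by_contra h
  have := hB k (not_lt.1 h)
  omega

/-- Exponents for which the orbit points are far from each other, measured from the base point. -/
lemma exists_spread_exponents (hw : ∀ k : ℤ, k ≠ 0 → w ^ k ≠ 1) (x₀ : X) (B : ℝ) :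
    ∃ μ : ℕ → ℤ, (∀ i, B < dist x₀ ((w ^ μ i) • x₀)) ∧
      ∀ i j, i ≠ j → B < |dist x₀ ((w ^ μ i) • x₀) - dist x₀ ((w ^ μ j) • x₀)| := by
  have hex : ∀ r : ℝ, ∃ k : ℤ, r < dist x₀ ((w ^ k) • x₀) := fun r => by
    obtain ⟨n, hn⟩ := exists_lt_dist_zpow hw x₀ r
    exact ⟨n, hn n (by simp)⟩
  choose κ hκ using hex
  let μ : ℕ → ℤ := fun i => Nat.rec (κ |B|) (fun _ k => κ (dist x₀ ((w ^ k) • x₀) + |B|)) i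
  have hsucc : ∀ i, dist x₀ ((w ^ μ i) • x₀) + |B| < dist x₀ ((w ^ μ (i + 1)) • x₀) :=
    fun i => hκ _
  have hB := le_abs_self B
  have hB0 := abs_nonneg B
  have hmono : Monotone fun i => dist x₀ ((w ^ μ i) • x₀) :=
    monotone_nat_of_le_succ fun i => by linarith [hsucc i]
  have hlt : ∀ i j, i < j → B < dist x₀ ((w ^ μ j) • x₀) - dist x₀ ((w ^ μ i) • x₀) := by
    intro i j hij
    have h1 : dist x₀ ((w ^ μ (i + 1)) • x₀) ≤ dist x₀ ((w ^ μ j) • x₀) := hmono hij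
    linarith [hsucc i]
  refine ⟨μ, fun i => ?_, fun i j hij => ?_⟩
  · have h1 : dist x₀ ((w ^ μ 0) • x₀) ≤ dist x₀ ((w ^ μ i) • x₀) := hmono (Nat.zero_le i)
    have h2 : |B| < dist x₀ ((w ^ μ 0) • x₀) := hκ _
    linarith
  · rcases lt_or_gt_of_ne hij with h | h
    · rw [abs_sub_comm]; exact (hlt i j h).trans_le (le_abs_self _)
    · exact (hlt j i h).trans_le (le_abs_self _)

end Orbit

section QuasiLine

variable {G X : Type*} [Group G] [MetricSpace X] [MulAction G X] [IsIsometricSMul G X]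
  [ProperSpace X] [ProperlyDiscontinuousSMul G X] {w : G} {x₀ : X}

/-- If the whole space is close to an orbit of a cyclic group, geodesics pass close to every orbit
point between their ends. -/
lemma exists_near_zpow_of_dense (hw : ∀ k : ℤ, k ≠ 0 → w ^ k ≠ 1) {R : ℝ}
    (hR : ∀ y : X, ∃ k : ℤ, dist y ((w ^ k) • x₀) ≤ R) :
    ∃ K : ℝ, 0 ≤ K ∧ ∀ (α : ℝ → X) (S : ℝ) (x y : X) (i j m : ℤ), IsGeodesicSegment α S x y →
      dist x ((w ^ i) • x₀) ≤ R → dist y ((w ^ j) • x₀) ≤ R → (i ≤ m ∧ m ≤ j ∨ j ≤ m ∧ m ≤ i) →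
      ∃ u ∈ Set.Icc 0 S, dist (α u) ((w ^ m) • x₀) ≤ K := by
  have hR0 : 0 ≤ R := by
    obtain ⟨k, hk⟩ := hR x₀; exact dist_nonneg.trans hk
  obtain ⟨B, hB⟩ := exists_natAbs_le_of_dist_le hw x₀ (2 * R + 2)
  refine ⟨R + 1 + B * dist x₀ (w • x₀), by positivity, ?_⟩
  intro α S x y i j m hα hx hy hm
  obtain ⟨A₁, hA₁⟩ : ∃ A : Set X, ∀ z, z ∈ A ↔ ∃ k ≤ m, (w ^ k) • x₀ = z :=
    ⟨{z | ∃ k ≤ m, (w ^ k) • x₀ = z}, fun _ => Iff.rfl⟩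
  obtain ⟨A₂, hA₂⟩ : ∃ A : Set X, ∀ z, z ∈ A ↔ ∃ k ≥ m, (w ^ k) • x₀ = z :=
    ⟨{z | ∃ k ≥ m, (w ^ k) • x₀ = z}, fun _ => Iff.rfl⟩
  have hne₁ : A₁.Nonempty := ⟨_, (hA₁ _).2 ⟨m, le_rfl, rfl⟩⟩
  have hne₂ : A₂.Nonempty := ⟨_, (hA₂ _).2 ⟨m, le_rfl, rfl⟩⟩
  have hcl : ∀ A : Set X, IsClosed {z | Metric.infDist z A ≤ R} := fun A =>
    isClosed_le (Metric.continuous_infDist_pt A) continuous_const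
  have hmem : ∀ z k, dist z ((w ^ k) • x₀) ≤ R →
      (k ≤ m → Metric.infDist z A₁ ≤ R) ∧ (m ≤ k → Metric.infDist z A₂ ≤ R) := fun z k hz =>
    ⟨fun hk => (Metric.infDist_le_dist_of_mem ((hA₁ _).2 ⟨k, hk, rfl⟩)).trans hz,
      fun hk => (Metric.infDist_le_dist_of_mem ((hA₂ _).2 ⟨k, hk, rfl⟩)).trans hz⟩
  have hpre : IsPreconnected (α '' Set.Icc 0 S) :=
    isPreconnected_Icc.image α hα.2.2.2.continuousOn
  have hxI : x ∈ α '' Set.Icc 0 S := ⟨0, ⟨le_rfl, hα.1⟩, hα.2.1⟩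
  have hyI : y ∈ α '' Set.Icc 0 S := ⟨S, ⟨hα.1, le_rfl⟩, hα.2.2.1⟩
  obtain ⟨_, ⟨u, hu, rfl⟩, h1, h2⟩ := isPreconnected_closed_iff.1 hpre _ _ (hcl A₁) (hcl A₂)
    (fun z _ => by
      obtain ⟨k, hk⟩ := hR z
      rcases le_total k m with h | h
      · exact Or.inl ((hmem z k hk).1 h)
      · exact Or.inr ((hmem z k hk).2 h))
    (by
      rcases hm with ⟨h, h'⟩ | ⟨h, h'⟩
      · exact ⟨x, hxI, (hmem x i hx).1 h⟩
      · exact ⟨y, hyI, (hmem y j hy).1 h⟩)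
    (by
      rcases hm with ⟨h, h'⟩ | ⟨h, h'⟩
      · exact ⟨y, hyI, (hmem y j hy).2 h'⟩
      · exact ⟨x, hxI, (hmem x i hx).2 h'⟩)
  obtain ⟨_, hz₁, hdk⟩ := (Metric.infDist_lt_iff hne₁).1 (lt_of_le_of_lt h1 (lt_add_one R))
  obtain ⟨_, hz₂, hdl⟩ := (Metric.infDist_lt_iff hne₂).1 (lt_of_le_of_lt h2 (lt_add_one R))
  obtain ⟨k, hk, rfl⟩ := (hA₁ _).1 hz₁
  obtain ⟨l, hl, rfl⟩ := (hA₂ _).1 hz₂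
  have hkl := hB (l - k) (by
    rw [← dist_zpow_zpow]
    linarith [dist_triangle_left ((w ^ k) • x₀) ((w ^ l) • x₀) (α u)])
  obtain ⟨n, hn⟩ : ∃ n : ℕ, m = k + n := ⟨(m - k).toNat, by omega⟩
  refine ⟨u, hu, ?_⟩
  have h3 := dist_zpow_smul_le w x₀ n k
  rw [← hn] at h3
  have h4 : (n : ℝ) ≤ B := by exact_mod_cast (show n ≤ B by omega)
  have h5 := mul_le_mul_of_nonneg_right h4 (dist_nonneg (x := x₀) (y := w • x₀))
  linarith [dist_triangle (α u) ((w ^ k) • x₀) ((w ^ m) • x₀)]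

lemma gromovHyperbolic_of_dense (hw : ∀ k : ℤ, k ≠ 0 → w ^ k ≠ 1) {R : ℝ}
    (hR : ∀ y : X, ∃ k : ℤ, dist y ((w ^ k) • x₀) ≤ R) : GromovHyperbolic X := by
  obtain ⟨K, hK0, hK⟩ := exists_near_zpow_of_dense hw hR
  have hR0 : 0 ≤ R := by
    obtain ⟨k, hk⟩ := hR x₀; exact dist_nonneg.trans hk
  refine ⟨R + K, by linarith, ?_⟩
  intro x y z γ₁ γ₂ γ₃ T₁ T₂ T₃ h₁ h₂ h₃ s hs
  obtain ⟨i, hi⟩ := hR x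
  obtain ⟨j, hj⟩ := hR y
  obtain ⟨k, hk⟩ := hR z
  obtain ⟨a, ha⟩ := hR (γ₁ s)
  have hcases : (j ≤ a ∧ a ≤ k ∨ k ≤ a ∧ a ≤ j) ∨ (k ≤ a ∧ a ≤ i ∨ i ≤ a ∧ a ≤ k) ∨
      (i ≤ j ∧ j ≤ a ∨ a ≤ j ∧ j ≤ i) ∨ (a ≤ i ∧ i ≤ j ∨ j ≤ i ∧ i ≤ a) := by omega
  rcases hcases with h | h | h | h
  · obtain ⟨u, hu, hd⟩ := hK γ₂ T₂ y z j k a h₂ hj hk h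
    exact ⟨γ₂ u, Or.inl ⟨u, hu, rfl⟩, by linarith [dist_triangle_right (γ₁ s) (γ₂ u) (w ^ a • x₀)]⟩
  · obtain ⟨u, hu, hd⟩ := hK γ₃ T₃ z x k i a h₃ hk hi h
    exact ⟨γ₃ u, Or.inr ⟨u, hu, rfl⟩, by linarith [dist_triangle_right (γ₁ s) (γ₃ u) (w ^ a • x₀)]⟩
  · obtain ⟨u, hu, hd⟩ := hK γ₁ s x (γ₁ s) i a j (h₁.initial hs.1 hs.2) hi ha h
    refine ⟨y, Or.inl ⟨0, ⟨le_rfl, h₂.1⟩, h₂.2.1⟩, ?_⟩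
    have h4 := h₁.dist_right hs
    have h5 := h₁.dist_right (s := u) ⟨hu.1, hu.2.trans hs.2⟩
    linarith [hu.2, dist_triangle_right (γ₁ u) y (w ^ j • x₀)]
  · obtain ⟨u, hu, hd⟩ := hK _ _ _ _ a j i (h₁.sub hs.1 hs.2 le_rfl) ha
      (by rw [h₁.2.2.1]; exact hj) (by omega)
    refine ⟨x, Or.inr ⟨T₃, ⟨h₃.1, le_rfl⟩, h₃.2.2.1⟩, ?_⟩
    have h4 := h₁.dist_left hs
    have h5 := h₁.dist_left (s := s + u) ⟨by linarith [hs.1, hu.1], by linarith [hu.2]⟩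
    rw [dist_comm]
    linarith [hu.1, dist_triangle_right x (γ₁ (s + u)) (w ^ i • x₀)]

end QuasiLine

section Commensurating

/-- `g` conjugates a nontrivial power of `w` to a nontrivial power of `w`. -/
def Commensurates {G : Type*} [Group G] (w g : G) : Prop :=
  ∃ i j : ℤ, i ≠ 0 ∧ j ≠ 0 ∧ SemiconjBy g (w ^ j) (w ^ i)

lemma Commensurates.inv {G : Type*} [Group G] {w g : G} (h : Commensurates w g) :
    Commensurates w g⁻¹ := by
  obtain ⟨i, j, hi, hj, h⟩ := h
  exact ⟨j, i, hj, hi, h.inv_symm_left⟩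

lemma Commensurates.exists_near {G X : Type*} [Group G] [MetricSpace X] [MulAction G X]
    [IsIsometricSMul G X] {w g : G} (h : Commensurates w g) (x₀ : X) :
    ∃ R : ℝ, 0 ≤ R ∧ ∀ k : ℤ, ∃ l : ℤ, dist ((g * w ^ k) • x₀) ((w ^ l) • x₀) ≤ R := by
  obtain ⟨i, j, hi, hj, h⟩ := h
  refine ⟨∑ r ∈ Finset.range j.natAbs, dist ((g * w ^ r) • x₀) x₀,
    Finset.sum_nonneg fun _ _ => dist_nonneg, fun k => ⟨i * (k / j), ?_⟩⟩
  have h1 : g * w ^ (j * (k / j)) = w ^ (i * (k / j)) * g := by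
    rw [zpow_mul, zpow_mul]; exact h.zpow_right _
  obtain ⟨r, hr⟩ : ∃ r : ℕ, k % j = r := ⟨(k % j).toNat, by
    have := Int.emod_nonneg k hj; omega⟩
  have hrj : r < j.natAbs := by
    have := Int.emod_lt_abs k hj
    rw [hr, Int.abs_eq_natAbs] at this
    exact_mod_cast this
  have h2 : g * w ^ k = w ^ (i * (k / j)) * (g * w ^ r) := by
    conv_lhs => rw [← Int.mul_ediv_add_emod k j, hr, zpow_add, ← mul_assoc, h1, zpow_natCast]
    rw [mul_assoc]
  rw [h2, mul_smul, dist_smul]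
  exact Finset.single_le_sum (f := fun r => dist ((g * w ^ r) • x₀) x₀)
    (fun _ _ => dist_nonneg) (Finset.mem_range.2 hrj)

variable {G X : Type*} [Group G] [MetricSpace X] [MulAction G X] [IsIsometricSMul G X]
  [ProperSpace X] [ProperlyDiscontinuousSMul G X] {w : G} {x₀ : X}

lemma Commensurates.exists_near_bottleneck {w g : G} (h : Commensurates w g)
    (hX : GeodesicSpace X) (hw : ∀ k : ℤ, k ≠ 0 → w ^ k ≠ 1) {D : ℝ}
    (hA : Bottleneck D (line w x₀ 1)) :
    ∃ a c : ℤ, dist ((g * w ^ c) • x₀) ((w ^ a) • x₀) ≤ 3 * D := by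
  obtain ⟨i, j, hi, hj, h⟩ := h
  obtain ⟨n, hn⟩ := exists_lt_dist_zpow hw x₀ D
  obtain ⟨p, hp⟩ := projSet_line_nonempty w x₀ 1 (g • x₀)
  obtain ⟨b, hb⟩ := hp.1
  simp only [one_mul] at hb
  have hsemi : g * w ^ (j * n) = w ^ (i * n) * g := by
    rw [zpow_mul, zpow_mul]; exact h.zpow_right _
  have hp' : w ^ (i * n) • p ∈ projSet (line w x₀ 1) ((g * w ^ (j * n)) • x₀) := by
    have := (smul_mem_projSet_line (w := w) (x₀ := x₀) (w ^ (i * n)) 1).2 hp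
    rwa [mul_one, ← one_mul (w ^ (i * n)), line_mul_zpow, one_mul, ← mul_smul, ← hsemi] at this
  have hd : D < dist p (w ^ (i * n) • p) := by
    rw [← hb, ← mul_smul, ← zpow_add, dist_zpow_zpow]
    apply hn
    have : n ≤ (i * n).natAbs := by
      rw [Int.natAbs_mul, Int.natAbs_natCast]
      exact Nat.le_mul_of_pos_left n (Int.natAbs_pos.2 hi)
    convert this using 2
    ring
  obtain ⟨α, S, hα⟩ := hX (g • x₀) ((g * w ^ (j * n)) • x₀)
  obtain ⟨s, hs, hds⟩ := (hA.2 _ _ _ _ hp hp' hd α S hα).1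
  obtain ⟨r, hr⟩ := projSet_line_nonempty w x₀ g (α s)
  have h1 := (hA.line g).quasiconvex hX (ε := 0) hα
    (p := g • x₀) ⟨0, by simp⟩ ⟨j * n, rfl⟩ (by simp) (by simp) hs hr
  obtain ⟨c, rfl⟩ := hr.1
  refine ⟨b, c, ?_⟩
  rw [hb]
  linarith [dist_triangle_left ((g * w ^ c) • x₀) p (α s)]

/-- If the space is not hyperbolic, not every element commensurates `w`. -/
lemma exists_not_commensurates (hX : GeodesicSpace X) (hnh : ¬ GromovHyperbolic X)
    (hw : ∀ k : ℤ, k ≠ 0 → w ^ k ≠ 1) {D R : ℝ} (hA : Bottleneck D (line w x₀ 1))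
    (hdense : ∀ y : X, ∃ g : G, dist y (g • x₀) ≤ R) : ∃ g : G, ¬ Commensurates w g := by
  by_contra hcon
  push Not at hcon
  apply hnh
  choose ρ hρ0 hρ using fun g => (hcon g).exists_near x₀
  have hF : {f : G | dist (f • x₀) x₀ ≤ 3 * D}.Finite := finite_setOf_dist_smul_le x₀ x₀ _
  refine gromovHyperbolic_of_dense hw (x₀ := x₀) (R := R + ∑ f ∈ hF.toFinset, ρ f) fun y => ?_
  obtain ⟨g, hg⟩ := hdense y
  obtain ⟨a, c, hac⟩ := (hcon g).exists_near_bottleneck hX hw hA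
  set f := (w ^ a)⁻¹ * g * w ^ c with hf
  have hfF : f ∈ hF.toFinset := by
    rw [hF.mem_toFinset]
    show dist (f • x₀) x₀ ≤ 3 * D
    rw [← dist_smul (w ^ a), ← mul_smul, hf]
    simpa [mul_assoc] using hac
  obtain ⟨l, hl⟩ := hρ f (-c)
  refine ⟨a + l, ?_⟩
  have h1 : dist (g • x₀) ((w ^ (a + l)) • x₀) = dist ((f * w ^ (-c)) • x₀) ((w ^ l) • x₀) := by
    rw [← dist_smul (w ^ a) _ ((w ^ l) • x₀), ← mul_smul, ← mul_smul, ← zpow_add, hf]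
    simp [mul_assoc]
  have h2 := Finset.single_le_sum (f := ρ) (fun f _ => hρ0 f) hfF
  linarith [dist_triangle y (g • x₀) ((w ^ (a + l)) • x₀)]

/-- Translates by elements which do not commensurate `w` have uniformly bounded projections. -/
lemma exists_projection_bound (hX : GeodesicSpace X)
    {D : ℝ} (hA : Bottleneck D (line w x₀ 1)) (hw : ∀ k : ℤ, k ≠ 0 → w ^ k ≠ 1) :
    ∃ K : ℝ, 0 ≤ K ∧ ∀ g : G, ¬ Commensurates w g → ∀ y ∈ line w x₀ g, ∀ y' ∈ line w x₀ g,
      ∀ p ∈ projSet (line w x₀ 1) y, ∀ p' ∈ projSet (line w x₀ 1) y', dist p p' ≤ K := by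
  have hD := hA.1
  have hF : {f : G | dist (f • x₀) x₀ ≤ 6 * D}.Finite := finite_setOf_dist_smul_le x₀ x₀ _
  set c := hF.toFinset.card
  refine ⟨c * (8 * D + 1) + 2 * D, by positivity, ?_⟩
  intro g hg y hy y' hy' p hp p' hp'
  by_contra hcon
  push Not at hcon
  apply hg
  have hc0 : 0 ≤ c * (8 * D + 1) := by positivity
  obtain ⟨β, S, hβ⟩ := hX y y'
  obtain ⟨⟨t₁, ht₁, hd₁⟩, t₂, ht₂, hd₂⟩ := hA.2 y y' p p' hp hp' (by linarith) β S hβ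
  have hlen : c * (8 * D + 1) ≤ |t₂ - t₁| := by
    have h1 := dist_triangle4 p (β t₁) (β t₂) p'
    rw [hβ.2.2.2 t₁ ht₁ t₂ ht₂, dist_comm p (β t₁)] at h1
    linarith
  obtain ⟨s₁, hs₁, s₂, hs₂, u, hu, u', hu', hs, hdu, hdu'⟩ : ∃ s₁ ∈ Set.Icc 0 S,
      ∃ s₂ ∈ Set.Icc 0 S, ∃ u ∈ line w x₀ 1, ∃ u' ∈ line w x₀ 1,
      s₁ + c * (8 * D + 1) ≤ s₂ ∧ dist (β s₁) u ≤ D ∧ dist (β s₂) u' ≤ D := by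
    rcases le_total t₁ t₂ with h | h
    · rw [abs_of_nonneg (by linarith)] at hlen
      exact ⟨t₁, ht₁, t₂, ht₂, p, hp.1, p', hp'.1, by linarith, hd₁, hd₂⟩
    · rw [abs_of_nonpos (by linarith)] at hlen
      exact ⟨t₂, ht₂, t₁, ht₁, p', hp'.1, p, hp.1, by linarith, hd₂, hd₁⟩
  have hpt : ∀ n : ℕ, ∃ a b : ℤ, n ∈ Finset.range (c + 1) →
      s₁ + n * (8 * D + 1) ≤ s₂ ∧
      dist (β (s₁ + n * (8 * D + 1))) ((w ^ a) • x₀) ≤ 4 * D ∧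
      dist (β (s₁ + n * (8 * D + 1))) ((g * w ^ b) • x₀) ≤ 2 * D := by
    intro n
    by_cases hn : n ∈ Finset.range (c + 1)
    swap
    · exact ⟨0, 0, fun h => absurd h hn⟩
    have hn' : (n : ℝ) ≤ c := by
      rw [Finset.mem_range] at hn; exact_mod_cast Nat.lt_succ_iff.1 hn
    have hn1 : (n : ℝ) * (8 * D + 1) ≤ c * (8 * D + 1) :=
      mul_le_mul_of_nonneg_right hn' (by linarith)
    have hn0 : 0 ≤ (n : ℝ) * (8 * D + 1) := by positivity
    obtain ⟨r, hr⟩ := projSet_line_nonempty w x₀ 1 (β (s₁ + n * (8 * D + 1)))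
    obtain ⟨r', hr'⟩ := projSet_line_nonempty w x₀ g (β (s₁ + n * (8 * D + 1)))
    have h1 := hA.quasiconvex hX (hβ.sub hs₁.1 (by linarith) hs₂.2) hu hu' hdu hdu'
      (s := n * (8 * D + 1)) ⟨hn0, by linarith⟩ hr
    have h2 := (hA.line g).quasiconvex hX (ε := 0) hβ hy hy' (by simp) (by simp)
      ⟨by linarith [hs₁.1], by linarith [hs₂.2]⟩ hr'
    obtain ⟨a, rfl⟩ := hr.1
    obtain ⟨b, rfl⟩ := hr'.1
    simp only [one_mul] at h1
    exact ⟨a, b, fun _ => ⟨by linarith, by linarith, by linarith⟩⟩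
  choose a b hab using hpt
  obtain ⟨m, hm, n, hn, hmn, hf⟩ := Finset.exists_ne_map_eq_of_card_lt_of_maps_to
    (s := Finset.range (c + 1)) (t := hF.toFinset) (by simp [c])
    (f := fun n => (w ^ a n)⁻¹ * g * w ^ b n) (fun n hn => by
      simp only [Finset.mem_coe, hF.mem_toFinset, Set.mem_ofPred_eq]
      obtain ⟨-, h1, h2⟩ := hab n hn
      rw [← dist_smul (w ^ a n), ← mul_smul]
      have h3 := dist_triangle_left ((g * w ^ b n) • x₀) ((w ^ a n) • x₀)
        (β (s₁ + n * (8 * D + 1)))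
      simp only [mul_assoc, mul_inv_cancel_left]
      linarith)
  have hane : a m ≠ a n := by
    intro h
    obtain ⟨hm0, hm1, -⟩ := hab m hm
    obtain ⟨hn0, hn1, -⟩ := hab n hn
    rw [← h] at hn1
    have h1 := dist_triangle_right (β (s₁ + m * (8 * D + 1))) (β (s₁ + n * (8 * D + 1)))
      ((w ^ a m) • x₀)
    have hpos : ∀ k : ℕ, 0 ≤ (k : ℝ) * (8 * D + 1) := fun k => by positivity
    rw [hβ.2.2.2 _ ⟨by linarith [hs₁.1, hpos m], by linarith [hs₂.2]⟩ _
      ⟨by linarith [hs₁.1, hpos n], by linarith [hs₂.2]⟩] at h1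
    have h2 : s₁ + n * (8 * D + 1) - (s₁ + m * (8 * D + 1)) = ((n : ℝ) - m) * (8 * D + 1) := by
      ring
    rw [h2, abs_mul, abs_of_pos (show 0 < 8 * D + 1 by linarith)] at h1
    have h3 : (1 : ℝ) ≤ |(n : ℝ) - m| := by
      have : (1 : ℤ) ≤ |(n : ℤ) - m| := Int.one_le_abs (by omega)
      exact_mod_cast this
    nlinarith
  have hsemi : g * w ^ (b m - b n) = w ^ (a m - a n) * g := by
    have h1 : g * w ^ b m = w ^ a m * ((w ^ a n)⁻¹ * g * w ^ b n) := by
      rw [← hf]; simp [mul_assoc]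
    rw [zpow_sub, ← mul_assoc, h1, zpow_sub]
    simp [mul_assoc]
  refine ⟨a m - a n, b m - b n, by omega, ?_, hsemi⟩
  intro h0
  rw [h0, zpow_zero, mul_one] at hsemi
  exact hw (a m - a n) (by omega) (by simpa using hsemi.symm)

/-- An element which does not commensurate `w` has, up to multiplication by powers of `w`, mutual
projections near the base points. -/
lemma exists_projNear (hX : GeodesicSpace X) {D : ℝ} (hA : Bottleneck D (line w x₀ 1))
    (hw : ∀ k : ℤ, k ≠ 0 → w ^ k ≠ 1) :
    ∃ K : ℝ, 0 ≤ K ∧ ∀ g : G, ¬ Commensurates w g → ∃ i j : ℤ,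
      ProjNear K (line w x₀ 1) (line w x₀ g) ((w ^ i) • x₀) ∧
      ProjNear K (line w x₀ g) (line w x₀ 1) ((g * w ^ j) • x₀) := by
  obtain ⟨K, hK0, hK⟩ := exists_projection_bound hX hA hw
  refine ⟨K, hK0, fun g hg => ?_⟩
  have hhalf : ∀ g : G, ¬ Commensurates w g →
      ∃ i : ℤ, ProjNear K (line w x₀ 1) (line w x₀ g) ((w ^ i) • x₀) := by
    intro g hg
    have hmem : g • x₀ ∈ line w x₀ g := ⟨0, by simp⟩
    obtain ⟨p, hp⟩ := projSet_line_nonempty w x₀ 1 (g • x₀)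
    obtain ⟨i, hi⟩ := hp.1
    refine ⟨i, fun y hy q hq => ?_⟩
    simp only [one_mul] at hi
    rw [hi]
    exact hK g hg y hy _ hmem q hq p hp
  obtain ⟨i, hi⟩ := hhalf g hg
  obtain ⟨j, hj⟩ := hhalf g⁻¹ (fun h => hg (by simpa using h.inv))
  refine ⟨i, j, hi, ?_⟩
  have := hj.smul g
  rwa [mul_one, mul_inv_cancel, ← mul_smul] at this

/-- The distances from the base point of the projections of `x` and `s • x` are both large only if
they are close to each other. -/
lemma exists_proj_comparison (hX : GeodesicSpace X) {D : ℝ} (hA : Bottleneck D (line w x₀ 1))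
    (hw : ∀ k : ℤ, k ≠ 0 → w ^ k ≠ 1) (s : G) :
    ∃ E : ℝ, ∀ x p p' : X, p ∈ projSet (line w x₀ 1) x → p' ∈ projSet (line w x₀ 1) (s • x) →
      dist x₀ p ≤ E ∨ dist x₀ p' ≤ E ∨ |dist x₀ p - dist x₀ p'| ≤ E := by
  have hD := hA.1
  by_cases hs : Commensurates w s
  · obtain ⟨R, hR0, hR⟩ := hs.exists_near x₀
    obtain ⟨R', hR'0, hR'⟩ := hs.inv.exists_near x₀
    refine ⟨2 * R + R' + 2 * D + dist x₀ (s • x₀), fun x p p' hp hp' => Or.inr (Or.inr ?_)⟩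
    obtain ⟨k, hk⟩ := hp.1
    obtain ⟨l, hl⟩ := hp'.1
    simp only [one_mul] at hk hl
    obtain ⟨m, hm⟩ := hR k
    obtain ⟨n, hn⟩ := hR' l
    rw [mul_smul, hk] at hm
    rw [mul_smul, hl, ← dist_smul s, smul_inv_smul] at hn
    have h1 := hA.dist_add_dist_le hX hp' ⟨m, rfl⟩
    simp only [one_mul] at h1
    have h2 := hp.2 ((w ^ n) • x₀) ⟨n, by simp⟩
    rw [← dist_smul s, ← dist_smul s x] at h2
    have h3 := dist_triangle (s • x) p' (s • w ^ n • x₀)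
    have h4 := dist_triangle (s • x) (s • p) (w ^ m • x₀)
    have h5 := dist_triangle_right p' (s • p) (w ^ m • x₀)
    have h6 : dist x₀ p = dist (s • x₀) (s • p) := (dist_smul s x₀ p).symm
    have h7 := dist_triangle4 (s • x₀) x₀ p' (s • p)
    have h8 := dist_triangle4 x₀ (s • x₀) (s • p) p'
    rw [dist_comm (s • p) p'] at h8
    rw [dist_comm (s • x₀) x₀] at h7
    rw [abs_le]
    constructor <;> linarith
  · obtain ⟨K, hK0, hK⟩ := exists_projNear hX hA hw
    obtain ⟨i, j, hi, hj⟩ := hK s hs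
    refine ⟨dist x₀ ((w ^ i) • x₀) + dist x₀ ((w ^ j) • x₀) + K + 3 * D,
      fun x p p' hp hp' => ?_⟩
    have n1 := dist_nonneg (x := x₀) (y := (w ^ i) • x₀)
    have n2 := dist_nonneg (x := x₀) (y := (w ^ j) • x₀)
    by_cases h : K + D < dist p' ((w ^ i) • x₀)
    · have hsp : s • p ∈ projSet (line w x₀ s) (s • x) := by
        have := (smul_mem_projSet_line (w := w) (x₀ := x₀) s 1).2 hp
        rwa [mul_one] at this
      have h1 := hA.proj_near hX (hA.line s) (projSet_line_nonempty w x₀ 1)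
        (projSet_line_nonempty w x₀ s) hi hj hp' h hsp
      rw [mul_smul, dist_smul] at h1
      left
      linarith [dist_triangle_right x₀ p ((w ^ j) • x₀)]
    · right; left
      linarith [dist_triangle_right x₀ p' ((w ^ i) • x₀)]

end Commensurating

section QuasiGeodesics

variable {X : Type*} [MetricSpace X]

lemma continuousOn_ite_Icc {f g : ℝ → X} {a b c : ℝ} (hf : ContinuousOn f (Set.Icc a c))
    (hg : ContinuousOn g (Set.Icc c b)) (hac : a ≤ c) (hcb : c ≤ b) (hfg : f c = g c) :
    ContinuousOn (fun t => if t ≤ c then f t else g t) (Set.Icc a b) := by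
  rw [← Set.Icc_union_Icc_eq_Icc hac hcb]
  refine ContinuousOn.union_of_isClosed (hf.congr fun t ht => if_pos ht.2)
    (hg.congr fun t ht => ?_) isClosed_Icc isClosed_Icc
  by_cases h : t ≤ c
  · obtain rfl : t = c := le_antisymm h ht.1
    simp [hfg]
  · simp [h]

lemma qGeoOn_of_le {Q : ℝ} {I : Set ℝ} {c : ℝ → X} (hc : ContinuousOn c I)
    (h : ∀ s ∈ I, ∀ t ∈ I, s ≤ t →
      (t - s) / Q - Q ≤ dist (c s) (c t) ∧ dist (c s) (c t) ≤ Q * (t - s) + Q) :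
    QGeoOn Q I c := by
  refine ⟨hc, fun s hs t ht => ?_⟩
  rcases le_total s t with hst | hst
  · rw [abs_of_nonneg (by linarith)]; exact h s hs t ht hst
  · rw [abs_of_nonpos (by linarith), neg_sub, dist_comm]; exact h t ht s hs hst

lemma QGeoOn.reverse {Q a b : ℝ} {c : ℝ → X} (h : QGeoOn Q (Set.Icc a b) c) :
    QGeoOn Q (Set.Icc (-b) (-a)) fun t => c (-t) := by
  have hmaps : Set.MapsTo (fun t : ℝ => -t) (Set.Icc (-b) (-a)) (Set.Icc a b) := fun t ht =>
    ⟨by linarith [ht.2], by linarith [ht.1]⟩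
  refine ⟨h.1.comp continuous_neg.continuousOn hmaps, fun s hs t ht => ?_⟩
  have := h.2 (-s) (hmaps hs) (-t) (hmaps ht)
  rwa [show -t - -s = -(t - s) by ring, abs_neg] at this

lemma MorseOn.reverse {N : ℝ → ℝ} {S : ℝ} {α : ℝ → X} (h : MorseOn N (Set.Icc 0 S) α) :
    MorseOn N (Set.Icc 0 S) fun t => α (S - t) := by
  intro Q hQ s hs t ht hst lam a b hab hlam ha hb u hu
  obtain ⟨v, hv, hd⟩ := h Q hQ (S - t) ⟨by linarith [ht.2], by linarith [ht.1]⟩ (S - s)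
    ⟨by linarith [hs.2], by linarith [hs.1]⟩ (by linarith) (fun t => lam (-t)) (-b) (-a)
    (by linarith) hlam.reverse (by simpa using hb) (by simpa using ha) (-u)
    ⟨by linarith [hu.2], by linarith [hu.1]⟩
  refine ⟨S - v, ⟨by linarith [hv.2], by linarith [hv.1]⟩, ?_⟩
  simpa using hd

lemma QGeoOn.extend_left (hX : GeodesicSpace X) {Q D a b : ℝ} {c : ℝ → X} (hQ : 1 ≤ Q)
    (h : QGeoOn Q (Set.Icc a b) c) (hab : a ≤ b) {y : X} (hy : dist y (c a) ≤ D) :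
    ∃ (lam : ℝ → X) (a' : ℝ), a' ≤ a ∧ QGeoOn (Q + 3 * D) (Set.Icc a' b) lam ∧ lam a' = y ∧
      (∀ t ∈ Set.Icc a b, lam t = c t) ∧ ∀ t ∈ Set.Icc a' a, dist (lam t) (c a) ≤ D := by
  obtain ⟨σ, l, hσ⟩ := hX y (c a)
  have hl := hσ.dist_eq
  have hl0 := hσ.1
  have hD : 0 ≤ D := by linarith
  set lam : ℝ → X := fun t => if t ≤ a then σ (t - a + l) else c t with hlam
  have hbase : ∀ t ∈ Set.Icc a b, lam t = c t := by
    intro t ht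
    simp only [hlam]
    split_ifs with hta
    · obtain rfl : t = a := le_antisymm hta ht.1
      simpa using hσ.2.2.1
    · rfl
  have hleft : ∀ t ∈ Set.Icc (a - l) a, dist (lam t) (c a) ≤ D := by
    intro t ht
    simp only [hlam, if_pos ht.2]
    rw [hσ.dist_right ⟨by linarith [ht.1], by linarith [ht.2]⟩]
    linarith [ht.1]
  have hcont : ContinuousOn lam (Set.Icc (a - l) b) := by
    refine continuousOn_ite_Icc ?_ h.1 (by linarith) hab (by simpa using hσ.2.2.1)
    refine hσ.2.2.2.continuousOn.comp (by fun_prop) fun t ht => ?_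
    exact ⟨by linarith [ht.1], by linarith [ht.2]⟩
  refine ⟨lam, a - l, by linarith, ?_, ?_, hbase, hleft⟩
  · refine qGeoOn_of_le hcont fun s hs t ht hst => ?_
    have hclose : ∀ t ∈ Set.Icc (a - l) b, dist (lam t) (c (max t a)) ≤ D := by
      intro t ht
      rcases le_total t a with h | h
      · rw [max_eq_right h]; exact hleft t ⟨ht.1, h⟩
      · rw [max_eq_left h, hbase t ⟨h, ht.2⟩, dist_self]; exact hD
    have hmem : ∀ t ∈ Set.Icc (a - l) b, max t a ∈ Set.Icc a b := fun t ht =>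
      ⟨le_max_right _ _, max_le ht.2 hab⟩
    obtain ⟨h1, h2⟩ := h.2 _ (hmem s hs) _ (hmem t ht)
    have hmono : max s a ≤ max t a := max_le_max_right a hst
    rw [abs_of_nonneg (by linarith)] at h1 h2
    have e1 : max t a - max s a ≤ t - s := by
      rcases le_total s a with h | h <;> rcases le_total t a with h' | h' <;>
        simp [h, h'] <;> linarith
    have e2 : t - s ≤ max t a - max s a + D := by
      have := hs.1
      rcases le_total s a with h | h <;> rcases le_total t a with h' | h' <;>
        simp [h, h'] <;> linarith
    have h3 := hclose s hs
    have h4 := hclose t ht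
    have h5 := dist_triangle4 (c (max s a)) (lam s) (lam t) (c (max t a))
    have h6 := dist_triangle4 (lam s) (c (max s a)) (c (max t a)) (lam t)
    rw [dist_comm (c (max s a)) (lam s)] at h5
    rw [dist_comm (c (max t a)) (lam t)] at h6
    constructor
    · have k1 : (t - s) / (Q + 3 * D) ≤ (t - s) / Q :=
        div_le_div_of_nonneg_left (by linarith) (by linarith) (by linarith)
      have k2 : (t - s) / Q ≤ (max t a - max s a) / Q + D := by
        rw [div_add' _ _ _ (by linarith), div_le_div_iff_of_pos_right (by linarith)]
        nlinarith
      linarith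
    · have k1 : Q * (max t a - max s a) ≤ (Q + 3 * D) * (t - s) :=
        mul_le_mul (by linarith) e1 (by linarith) (by linarith)
      linarith
  · simp only [hlam, if_pos (show a - l ≤ a by linarith)]
    simpa using hσ.2.1

lemma QGeoOn.extend (hX : GeodesicSpace X) {Q D a b : ℝ} {c : ℝ → X} (hQ : 1 ≤ Q)
    (h : QGeoOn Q (Set.Icc a b) c) (hab : a ≤ b) {y z : X} (hy : dist y (c a) ≤ D)
    (hz : dist z (c b) ≤ D) :
    ∃ (lam : ℝ → X) (a' b' : ℝ), a' ≤ a ∧ b ≤ b' ∧ QGeoOn (Q + 6 * D) (Set.Icc a' b') lam ∧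
      lam a' = y ∧ lam b' = z ∧ (∀ t ∈ Set.Icc a b, lam t = c t) ∧
      ∀ t ∈ Set.Icc a' b', ∃ s ∈ Set.Icc a b, dist (lam t) (c s) ≤ D := by
  have hD : 0 ≤ D := dist_nonneg.trans hy
  obtain ⟨f, a', ha', hf, hfa, hfc, hfD⟩ := h.extend_left hX hQ hab hy
  have hfb : f b = c b := hfc b ⟨hab, le_rfl⟩
  obtain ⟨k, b', hb', hk, hkb, hkc, hkD⟩ := hf.reverse.extend_left hX (y := z) (D := D)
    (by linarith) (by linarith) (by simpa [hfb] using hz)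
  have hkf : ∀ t ∈ Set.Icc a' b, k (-t) = f t := by
    intro t ht
    have := hkc (-t) ⟨by linarith [ht.2], by linarith [ht.1]⟩
    simpa using this
  refine ⟨fun t => k (-t), a', -b', ha', by linarith, ?_, ?_, by simpa using hkb, ?_, ?_⟩
  · have := hk.reverse
    rw [neg_neg] at this
    convert this using 1
    ring
  · exact (hkf a' ⟨le_rfl, by linarith⟩).trans hfa
  · intro t ht
    exact (hkf t ⟨by linarith [ht.1], ht.2⟩).trans (hfc t ht)
  · intro t ht
    rcases le_total t b with htb | htb
    · have e : k (-t) = f t := hkf t ⟨ht.1, htb⟩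
      simp only [e]
      rcases le_total t a with hta | hta
      · exact ⟨a, ⟨le_rfl, hab⟩, hfD t ⟨ht.1, hta⟩⟩
      · exact ⟨t, ⟨hta, htb⟩, by rw [hfc t ⟨hta, htb⟩, dist_self]; exact hD⟩
    · refine ⟨b, ⟨hab, le_rfl⟩, ?_⟩
      have := hkD (-t) ⟨by linarith [ht.2], by linarith⟩
      simpa [hfb] using this

/-- Following a geodesic to the point closest to `z`, and then going to `z`, is a quasi-geodesic. -/
lemma qGeoOn_concat_nearest {γ σ : ℝ → X} {T l s₀ : ℝ} {x y z : X}
    (hγ : IsGeodesicSegment γ T x y) (hs₀ : s₀ ∈ Set.Icc 0 T)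
    (hmin : ∀ u ∈ Set.Icc 0 T, dist z (γ s₀) ≤ dist z (γ u))
    (hσ : IsGeodesicSegment σ l (γ s₀) z) :
    QGeoOn 3 (Set.Icc 0 (s₀ + l)) fun t => if t ≤ s₀ then γ t else σ (t - s₀) := by
  have hl := hσ.1
  have hld := hσ.dist_eq
  refine qGeoOn_of_le (continuousOn_ite_Icc ?_ ?_ hs₀.1 (by linarith) ?_) ?_
  · exact hγ.2.2.2.continuousOn.mono (Set.Icc_subset_Icc_right hs₀.2)
  · refine hσ.2.2.2.continuousOn.comp (by fun_prop) fun t ht => ?_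
    exact ⟨by linarith [ht.1], by linarith [ht.2]⟩
  · simp [hσ.2.1]
  intro s hs t ht hst
  suffices hmain : ∀ d : ℝ, dist (if s ≤ s₀ then γ s else σ (s - s₀))
      (if t ≤ s₀ then γ t else σ (t - s₀)) = d → t - s ≤ 3 * d ∧ d ≤ t - s by
    obtain ⟨h1, h2⟩ := hmain _ rfl
    constructor <;> linarith
  intro d hd
  by_cases hss : s ≤ s₀ <;> by_cases hts : t ≤ s₀ <;> simp only [hss, hts, if_true, if_false] at hd
  · rw [hγ.2.2.2 s ⟨hs.1, hss.trans hs₀.2⟩ t ⟨ht.1, hts.trans hs₀.2⟩,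
      abs_of_nonneg (by linarith)] at hd
    constructor <;> linarith
  · have hsI : s ∈ Set.Icc 0 T := ⟨hs.1, hss.trans hs₀.2⟩
    have htI : t - s₀ ∈ Set.Icc 0 l := ⟨by linarith, by linarith [ht.2]⟩
    have e1 := hσ.dist_left htI
    have e2 := hσ.dist_right htI
    have e3 := hγ.2.2.2 s hsI s₀ hs₀
    rw [abs_of_nonneg (by linarith)] at e3
    have e4 := hmin s hsI
    have t1 := dist_triangle (γ s) (γ s₀) (σ (t - s₀))
    have t2 := dist_triangle (γ s) (σ (t - s₀)) (γ s₀)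
    have t3 := dist_triangle (γ s) (σ (t - s₀)) z
    rw [dist_comm (σ (t - s₀)) (γ s₀)] at t2
    rw [dist_comm (γ s) z] at t3
    rw [dist_comm z (γ s₀)] at e4
    constructor <;> linarith
  · linarith
  · rw [hσ.2.2.2 (s - s₀) ⟨by linarith, by linarith [hs.2]⟩ (t - s₀)
      ⟨by linarith, by linarith [ht.2]⟩, abs_of_nonneg (by linarith)] at hd
    constructor <;> linarith

lemma GeodesicOn.qGeoOn {I : Set ℝ} {γ : ℝ → X} (h : GeodesicOn I γ) : QGeoOn 1 I γ :=
  ⟨h.continuousOn, fun s hs t ht => by rw [h s hs t ht]; constructor <;> linarith⟩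

/-- A continuous path between the ends of a geodesic segment and close to it passes close to each
of its points. -/
lemma exists_near_of_path_near {α lam : ℝ → X} {s t v a b M : ℝ}
    (hα : GeodesicOn (Set.Icc s t) α) (hab : a ≤ b) (hlam : ContinuousOn lam (Set.Icc a b))
    (ha : lam a = α s) (hb : lam b = α t)
    (hnear : ∀ u ∈ Set.Icc a b, ∃ r ∈ Set.Icc s t, dist (lam u) (α r) ≤ M)
    (hv : v ∈ Set.Icc s t) : ∃ u ∈ Set.Icc a b, dist (lam u) (α v) ≤ 3 * M := by
  have hM : 0 ≤ M := by
    obtain ⟨r, -, hr⟩ := hnear a ⟨le_rfl, hab⟩; exact dist_nonneg.trans hr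
  have hsub₁ : Set.Icc s v ⊆ Set.Icc s t := Set.Icc_subset_Icc_right hv.2
  have hsub₂ : Set.Icc v t ⊆ Set.Icc s t := Set.Icc_subset_Icc_left hv.1
  have hc₁ : IsCompact (α '' Set.Icc s v) := isCompact_Icc.image_of_continuousOn
    (hα.continuousOn.mono hsub₁)
  have hc₂ : IsCompact (α '' Set.Icc v t) := isCompact_Icc.image_of_continuousOn
    (hα.continuousOn.mono hsub₂)
  have hne₁ : (α '' Set.Icc s v).Nonempty := (Set.nonempty_Icc.2 hv.1).image α
  have hne₂ : (α '' Set.Icc v t).Nonempty := (Set.nonempty_Icc.2 hv.2).image α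
  have hcl : ∀ A : Set X, IsClosed {z | Metric.infDist z A ≤ M} := fun A =>
    isClosed_le (Metric.continuous_infDist_pt A) continuous_const
  obtain ⟨_, ⟨u, hu, rfl⟩, h1, h2⟩ := isPreconnected_closed_iff.1
    (isPreconnected_Icc.image lam hlam) _ _ (hcl (α '' Set.Icc s v)) (hcl (α '' Set.Icc v t))
    (by
      rintro _ ⟨u, hu, rfl⟩
      obtain ⟨r, hr, hd⟩ := hnear u hu
      rcases le_total r v with h | h
      · have hr' : r ∈ Set.Icc s v := ⟨hr.1, h⟩
        exact Or.inl ((Metric.infDist_le_dist_of_mem (Set.mem_image_of_mem α hr')).trans hd)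
      · have hr' : r ∈ Set.Icc v t := ⟨h, hr.2⟩
        exact Or.inr ((Metric.infDist_le_dist_of_mem (Set.mem_image_of_mem α hr')).trans hd))
    ⟨lam a, Set.mem_image_of_mem lam ⟨le_rfl, hab⟩, by
      refine (Metric.infDist_le_dist_of_mem
        (Set.mem_image_of_mem α (Set.left_mem_Icc.2 hv.1))).trans ?_
      rw [ha, dist_self]; exact hM⟩
    ⟨lam b, Set.mem_image_of_mem lam ⟨hab, le_rfl⟩, by
      refine (Metric.infDist_le_dist_of_mem
        (Set.mem_image_of_mem α (Set.right_mem_Icc.2 hv.2))).trans ?_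
      rw [hb, dist_self]; exact hM⟩
  obtain ⟨_, ⟨r₁, hr₁, rfl⟩, hd₁⟩ := hc₁.exists_infDist_eq_dist hne₁ (lam u)
  obtain ⟨_, ⟨r₂, hr₂, rfl⟩, hd₂⟩ := hc₂.exists_infDist_eq_dist hne₂ (lam u)
  have h1' : dist (lam u) (α r₁) ≤ M := hd₁ ▸ h1
  have h2' : dist (lam u) (α r₂) ≤ M := hd₂ ▸ h2
  have e1 := hα r₁ (hsub₁ hr₁) r₂ (hsub₂ hr₂)
  rw [abs_of_nonneg (by linarith [hr₁.2, hr₂.1])] at e1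
  have e2 := hα r₁ (hsub₁ hr₁) v hv
  rw [abs_of_nonneg (by linarith [hr₁.2])] at e2
  refine ⟨u, hu, ?_⟩
  linarith [dist_triangle_left (α r₁) (α r₂) (lam u), dist_triangle (lam u) (α r₁) (α v), hr₂.1]

/-- A quasi-geodesic and a geodesic with the same endpoints are close if the endpoints are close
to points on a Morse geodesic. -/
lemma MorseOn.qGeoOn_near_geodesic (hX : GeodesicSpace X) {N : ℝ → ℝ} {α : ℝ → X} {S s t : ℝ}
    (hαg : GeodesicOn (Set.Icc 0 S) α) (hα : MorseOn N (Set.Icc 0 S) α) (hs : s ∈ Set.Icc 0 S)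
    (ht : t ∈ Set.Icc 0 S) (hst : s ≤ t) {y z : X} {D : ℝ} (hy : dist (α s) y ≤ D)
    (hz : dist (α t) z ≤ D) {Q a b : ℝ} (hQ : 1 ≤ Q) {c : ℝ → X} (hab : a ≤ b)
    (hc : QGeoOn Q (Set.Icc a b) c) (hca : c a = y) (hcb : c b = z) {σ : ℝ → X} {T : ℝ}
    (hσ : IsGeodesicSegment σ T y z) {u : ℝ} (hu : u ∈ Set.Icc a b) :
    ∃ v ∈ Set.Icc 0 T, dist (c u) (σ v) ≤ N (Q + 6 * D) + 3 * N (1 + 6 * D) + D := by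
  have hD : 0 ≤ D := dist_nonneg.trans hy
  obtain ⟨f, a₁, b₁, ha₁, hb₁, hf, hfa, hfb, hfc, -⟩ := hc.extend hX hQ hab
    (D := D) (y := α s) (z := α t) (by rwa [hca]) (by rwa [hcb])
  obtain ⟨v, hv, hdv⟩ := hα _ (by linarith) s hs t ht hst f a₁ b₁ (by linarith) hf hfa hfb u
    ⟨by linarith [hu.1], by linarith [hu.2]⟩
  rw [hfc u hu] at hdv
  obtain ⟨k, a₂, b₂, ha₂, hb₂, hk, hka, hkb, -, hkσ⟩ := hσ.2.2.2.qGeoOn.extend hX le_rfl hσ.1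
    (D := D) (y := α s) (z := α t) (by rwa [hσ.2.1]) (by rwa [hσ.2.2.1])
  have hT := hσ.1
  obtain ⟨r, hr, hdr⟩ := exists_near_of_path_near
    (hαg.mono (Set.Icc_subset_Icc hs.1 ht.2)) (by linarith) hk.1 hka hkb
    (hα _ (by linarith) s hs t ht hst k a₂ b₂ (by linarith) hk hka hkb) hv
  obtain ⟨q, hq, hdq⟩ := hkσ r hr
  refine ⟨q, hq, ?_⟩
  have := dist_triangle4 (c u) (α v) (k r) (σ q)
  rw [dist_comm (α v) (k r)] at this
  linarith

/-- If all pairs of distant points are close to points on `N`-Morse geodesics, the space is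
hyperbolic. -/
lemma gromovHyperbolic_of_morse (hX : GeodesicSpace X) {N : ℝ → ℝ} (hN : IsMorseGauge N)
    {D R : ℝ} (hD : 0 ≤ D) (hR : 0 ≤ R)
    (H : ∀ y z : X, R ≤ dist y z → ∃ (α : ℝ → X) (S : ℝ), GeodesicOn (Set.Icc 0 S) α ∧
      MorseOn N (Set.Icc 0 S) α ∧ ∃ s ∈ Set.Icc 0 S, ∃ t ∈ Set.Icc 0 S,
        dist (α s) y ≤ D ∧ dist (α t) z ≤ D) : GromovHyperbolic X := by
  set δ := N (3 + 6 * D) + 3 * N (1 + 6 * D) + D with hδ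
  have hδ0 : 0 ≤ δ := by
    have h1 := hN.2.2 (3 + 6 * D) (by linarith)
    have h2 := hN.2.2 (1 + 6 * D) (by linarith)
    positivity
  have thin : ∀ (x y z : X) (γ σ : ℝ → X) (T l s₀ s : ℝ), IsGeodesicSegment γ T x y →
      IsGeodesicSegment σ l x z → s₀ ∈ Set.Icc 0 T →
      (∀ u ∈ Set.Icc 0 T, dist z (γ s₀) ≤ dist z (γ u)) → 0 ≤ s → s ≤ s₀ →
      ∃ v ∈ Set.Icc 0 l, dist (γ s) (σ v) ≤ 2 * R + δ := by
    intro x y z γ σ T l s₀ s hγ hσ hs₀ hmin hs hss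
    by_cases hxz : R ≤ dist x z
    · obtain ⟨α, S, hαg, hα, p, hp, q, hq, hdp, hdq⟩ := H x z hxz
      obtain ⟨ρ, m, hρ⟩ := hX (γ s₀) z
      have hc := qGeoOn_concat_nearest hγ hs₀ hmin hρ
      have hm := hρ.1
      have hc0 : (if (0:ℝ) ≤ s₀ then γ 0 else ρ (0 - s₀)) = x := by
        rw [if_pos hs₀.1, hγ.2.1]
      have hc1 : (if s₀ + m ≤ s₀ then γ (s₀ + m) else ρ (s₀ + m - s₀)) = z := by
        split_ifs with h
        · obtain rfl : m = 0 := by linarith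
          rw [add_zero, ← hρ.2.1, hρ.2.2.1]
        · rw [add_sub_cancel_left, hρ.2.2.1]
      have hsI : s ∈ Set.Icc 0 (s₀ + m) := ⟨hs, by linarith⟩
      have : ∃ v ∈ Set.Icc 0 l, dist (if s ≤ s₀ then γ s else ρ (s - s₀)) (σ v) ≤ δ := by
        rcases le_total p q with hpq | hpq
        · exact hα.qGeoOn_near_geodesic hX hαg hp hq hpq hdp hdq (by norm_num)
            (by linarith [hs₀.1]) hc hc0 hc1 hσ hsI
        · refine hα.reverse.qGeoOn_near_geodesic hX (s := S - p) (t := S - q) ?_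
            ⟨by linarith [hp.2], by linarith [hp.1]⟩ ⟨by linarith [hq.2], by linarith [hq.1]⟩
            (by linarith) (by simpa using hdp) (by simpa using hdq) (by norm_num)
            (by linarith [hs₀.1]) hc hc0 hc1 hσ hsI
          exact (IsGeodesicSegment.reverse ⟨hp.1.trans hp.2, rfl, rfl, hαg⟩).2.2.2
      obtain ⟨v, hv, hd⟩ := this
      rw [if_pos hss] at hd
      exact ⟨v, hv, by linarith⟩
    · push Not at hxz
      refine ⟨0, ⟨le_rfl, hσ.1⟩, ?_⟩
      have h1 := hγ.dist_left hs₀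
      have h2 := hγ.dist_left (s := s) ⟨hs, hss.trans hs₀.2⟩
      have h3 := hmin 0 ⟨le_rfl, hγ.1⟩
      rw [hγ.2.1, dist_comm z x] at h3
      rw [hσ.2.1, dist_comm]
      linarith [dist_triangle x z (γ s₀)]
  refine ⟨2 * R + δ, by linarith, ?_⟩
  intro x y z γ₁ γ₂ γ₃ T₁ T₂ T₃ h₁ h₂ h₃ s hs
  obtain ⟨s₀, hs₀, hmin⟩ := isCompact_Icc.exists_isMinOn (Set.nonempty_Icc.2 h₁.1)
    (f := fun u => dist z (γ₁ u)) ((continuous_const.dist continuous_id).comp_continuousOn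
      h₁.2.2.2.continuousOn)
  have hmin' : ∀ u ∈ Set.Icc 0 T₁, dist z (γ₁ s₀) ≤ dist z (γ₁ u) := fun u hu => hmin hu
  rcases le_total s s₀ with h | h
  · obtain ⟨v, hv, hd⟩ := thin x y z γ₁ _ T₁ T₃ s₀ s h₁ h₃.reverse hs₀ hmin' hs.1 h
    exact ⟨_, Or.inr ⟨T₃ - v, ⟨by linarith [hv.2], by linarith [hv.1]⟩, rfl⟩, hd⟩
  · obtain ⟨v, hv, hd⟩ := thin y x z _ γ₂ T₁ T₂ (T₁ - s₀) (T₁ - s) h₁.reverse h₂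
      ⟨by linarith [hs₀.2], by linarith [hs₀.1]⟩ (fun u hu => by
        simpa using hmin' (T₁ - u) ⟨by linarith [hu.2], by linarith [hu.1]⟩)
      (by linarith [hs.2]) (by linarith)
    exact ⟨_, Or.inl ⟨v, hv, rfl⟩, by simpa using hd⟩

end QuasiGeodesics

section NonMorse

variable {G X : Type*} [Group G] [MetricSpace X] [MulAction G X] [IsIsometricSMul G X]

lemma MorseOn.smul {N : ℝ → ℝ} {I : Set ℝ} {α : ℝ → X} (h : MorseOn N I α) (g : G) :
    MorseOn N I fun t => g • α t := by
  intro Q hQ s hs t ht hst lam a b hab hlam ha hb u hu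
  have hlam' : QGeoOn Q (Set.Icc a b) fun t => g⁻¹ • lam t :=
    ⟨(isometry_smul X g⁻¹).continuous.comp_continuousOn hlam.1, fun s hs t ht => by
      rw [dist_smul]; exact hlam.2 s hs t ht⟩
  obtain ⟨v, hv, hd⟩ := h Q hQ s hs t ht hst _ a b hab hlam' (by rw [ha, inv_smul_smul])
    (by rw [hb, inv_smul_smul]) u hu
  refine ⟨v, hv, ?_⟩
  rwa [← dist_smul g, smul_inv_smul] at hd

lemma GeodesicOn.smul {I : Set ℝ} {α : ℝ → X} (h : GeodesicOn I α) (g : G) :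
    GeodesicOn I fun t => g • α t :=
  fun s hs t ht => by rw [dist_smul]; exact h s hs t ht

/-- In a non-hyperbolic space there are distant orbit points such that no `N`-Morse geodesic passes
close to both of them. -/
lemma exists_not_morse (hX : GeodesicSpace X) (hnh : ¬ GromovHyperbolic X) {x₀ : X} {R : ℝ}
    (hR : 0 ≤ R) (hdense : ∀ y : X, ∃ g : G, dist y (g • x₀) ≤ R) {N : ℝ → ℝ}
    (hN : IsMorseGauge N) {D R₀ : ℝ} (hD : 0 ≤ D) (hR₀ : 0 ≤ R₀) :
    ∃ b : G, R₀ ≤ dist x₀ (b • x₀) ∧ ∀ (α : ℝ → X) (S : ℝ), GeodesicOn (Set.Icc 0 S) α →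
      MorseOn N (Set.Icc 0 S) α → ∀ s ∈ Set.Icc 0 S, ∀ t ∈ Set.Icc 0 S,
        dist (α s) x₀ ≤ D → D < dist (α t) (b • x₀) := by
  by_contra hcon
  push Not at hcon
  refine hnh (gromovHyperbolic_of_morse hX hN (D := D + R) (R := R₀ + 2 * R) (by linarith)
    (by linarith) fun y z hyz => ?_)
  obtain ⟨g, hg⟩ := hdense y
  obtain ⟨k, hk⟩ := hdense z
  have e : dist x₀ ((g⁻¹ * k) • x₀) = dist (g • x₀) (k • x₀) := by
    rw [← dist_smul g, mul_smul, smul_inv_smul]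
  obtain ⟨α, S, hαg, hα, s, hs, t, ht, hds, hdt⟩ := hcon (g⁻¹ * k) (by
    have := dist_triangle4 y (g • x₀) (k • x₀) z
    rw [dist_comm (k • x₀) z] at this
    rw [e]; linarith)
  refine ⟨_, S, hαg.smul g, hα.smul g, s, hs, t, ht, ?_, ?_⟩
  · rw [← dist_smul g] at hds
    linarith [dist_triangle_right (g • α s) y (g • x₀)]
  · rw [← dist_smul g, ← mul_smul, mul_inv_cancel_left] at hdt
    linarith [dist_triangle_right (g • α t) z (k • x₀)]

end NonMorse

section Junctions

variable {G X : Type*} [Group G] [MetricSpace X] [MulAction G X]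

/-- The translates by `g` and `h` of the orbit of `w` project to each other near `a` and `b`. -/
def Junction (w : G) (x₀ : X) (K : ℝ) (g h : G) (a b : X) : Prop :=
  ProjNear K (line w x₀ g) (line w x₀ h) a ∧ ProjNear K (line w x₀ h) (line w x₀ g) b

/-- All projections of `x` to the translate by `g` of the orbit of `w` are close to `c`. -/
def Seen (w : G) (x₀ : X) (r : ℝ) (g : G) (x c : X) : Prop :=
  ∀ p ∈ projSet (line w x₀ g) x, dist p c ≤ r

variable {w : G} {x₀ : X} {D K : ℝ}

lemma Junction.symm {g h : G} {a b : X} (H : Junction w x₀ K g h a b) :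
    Junction w x₀ K h g b a := ⟨H.2, H.1⟩

lemma Junction.mono {K' : ℝ} {g h : G} {a b : X} (H : Junction w x₀ K g h a b) (hK : K ≤ K') :
    Junction w x₀ K' g h a b :=
  ⟨fun y hy q hq => (H.1 y hy q hq).trans hK, fun y hy q hq => (H.2 y hy q hq).trans hK⟩

variable [IsIsometricSMul G X]

lemma Junction.smul {g h : G} {a b : X} (H : Junction w x₀ K g h a b) (k : G) :
    Junction w x₀ K (k * g) (k * h) (k • a) (k • b) := ⟨H.1.smul k, H.2.smul k⟩

lemma Seen.smul {r : ℝ} {g : G} {x c : X} (H : Seen w x₀ r g x c) (k : G) :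
    Seen w x₀ r (k * g) (k • x) (k • c) := by
  intro p hp
  have := H (k⁻¹ • p) (by rw [← smul_mem_projSet_line k, smul_inv_smul]; exact hp)
  rwa [← dist_smul k, smul_inv_smul] at this

variable [ProperSpace X] [ProperlyDiscontinuousSMul G X]

lemma Junction.seen_of_lt (hX : GeodesicSpace X) (hA : Bottleneck D (line w x₀ 1))
    {g h : G} {a b : X} (H : Junction w x₀ K g h a b) {x p : X}
    (hp : p ∈ projSet (line w x₀ g) x) (hpa : K + D < dist p a) :
    Seen w x₀ (K + 3 * D) h x b := fun _ hb' =>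
  (hA.line g).proj_near hX (hA.line h) (projSet_line_nonempty w x₀ g)
    (projSet_line_nonempty w x₀ h) H.1 H.2 hp hpa hb'

lemma Junction.seen (hX : GeodesicSpace X) (hA : Bottleneck D (line w x₀ 1))
    {g h : G} {a b c x : X} (H : Junction w x₀ K g h a b) (hx : Seen w x₀ (K + 3 * D) g x c)
    (hca : 2 * K + 4 * D < dist c a) : Seen w x₀ (K + 3 * D) h x b := by
  obtain ⟨p, hp⟩ := projSet_line_nonempty w x₀ g x
  refine H.seen_of_lt hX hA hp ?_
  linarith [hx p hp, dist_triangle_left c a p]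

lemma Seen.exists_near (hA : Bottleneck D (line w x₀ 1)) {r : ℝ} {g : G}
    {x y c d : X} (hx : Seen w x₀ r g x c) (hy : Seen w x₀ r g y d)
    (hcc : 2 * r + D < dist c d) {α : ℝ → X} {S : ℝ} (hα : IsGeodesicSegment α S x y) :
    (∃ s ∈ Set.Icc 0 S, dist (α s) c ≤ r + D) ∧ ∃ s ∈ Set.Icc 0 S, dist (α s) d ≤ r + D := by
  obtain ⟨p, hp⟩ := projSet_line_nonempty w x₀ g x
  obtain ⟨q, hq⟩ := projSet_line_nonempty w x₀ g y
  have h1 := hx p hp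
  have h2 := hy q hq
  have h3 := dist_triangle4 c p q d
  rw [dist_comm c p] at h3
  obtain ⟨⟨s, hs, hds⟩, t, ht, hdt⟩ := (hA.line g).2 x y p q hp hq (by linarith) α S hα
  exact ⟨⟨s, hs, by linarith [dist_triangle (α s) p c]⟩,
    ⟨t, ht, by linarith [dist_triangle (α t) q d]⟩⟩

/-- If two orbit translates form a junction at the base point, every point projects near the base
point on one of them. -/
lemma Junction.exists_seen (hX : GeodesicSpace X) (hA : Bottleneck D (line w x₀ 1))
    {e : G} (H : Junction w x₀ K 1 e x₀ (e • x₀)) (z : X) :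
    ∃ f : G, (f = 1 ∨ f = e) ∧ Seen w x₀ (K + 3 * D + dist x₀ (e • x₀)) f z x₀ := by
  have hD := hA.1
  have h0 := dist_nonneg (x := x₀) (y := e • x₀)
  by_cases h : Seen w x₀ (K + D) 1 z x₀
  · exact ⟨1, Or.inl rfl, fun p hp => by linarith [h p hp]⟩
  · simp only [Seen] at h
    push Not at h
    obtain ⟨p, hp, hd⟩ := h
    refine ⟨e, Or.inr rfl, fun q hq => ?_⟩
    have := H.seen_of_lt hX hA hp hd q hq
    linarith [dist_triangle_right q x₀ (e • x₀)]

lemma junction_of_bridge (hX : GeodesicSpace X) (hA : Bottleneck D (line w x₀ 1)) {g h : G}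
    {a b : X} (hab : Seen w x₀ K g b a) (hba : Seen w x₀ K h a b)
    (hfar : 5 * D + 3 * K < dist a b) : Junction w x₀ (2 * K + 3 * D) g h a b :=
  ⟨(hA.line g).projNear_of_bridge hX (hA.line h) (projSet_line_nonempty w x₀ g)
      (projSet_line_nonempty w x₀ h) hab hba hfar,
    (hA.line h).projNear_of_bridge hX (hA.line g) (projSet_line_nonempty w x₀ h)
      (projSet_line_nonempty w x₀ g) hba hab (by rwa [dist_comm])⟩

/-- Up to powers of `w`, an element not commensurating `w` forms a junction at the base point. -/
lemma exists_junction (hX : GeodesicSpace X) (hnh : ¬ GromovHyperbolic X)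
    (hw : ∀ k : ℤ, k ≠ 0 → w ^ k ≠ 1) {R : ℝ} (hA : Bottleneck D (line w x₀ 1))
    (hdense : ∀ y : X, ∃ g : G, dist y (g • x₀) ≤ R) :
    ∃ (e : G) (K : ℝ), 0 ≤ K ∧ Junction w x₀ K 1 e x₀ (e • x₀) := by
  obtain ⟨g, hg⟩ := exists_not_commensurates hX hnh hw hA hdense
  obtain ⟨K, hK0, hK⟩ := exists_projNear hX hA hw
  obtain ⟨i, j, hi, hj⟩ := hK g hg
  refine ⟨w ^ (-i) * (g * w ^ j), K, hK0, ?_⟩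
  have H : Junction w x₀ K 1 (g * w ^ j) ((w ^ i) • x₀) ((g * w ^ j) • x₀) := by
    rw [Junction, line_mul_zpow]; exact ⟨hi, hj⟩
  have H' := H.smul (w ^ (-i))
  rw [← mul_smul, ← mul_smul, ← zpow_add, neg_add_cancel, zpow_zero, one_smul] at H'
  rw [Junction, mul_one, ← one_mul (w ^ (-i)), line_mul_zpow, one_mul] at H'
  exact H'

end Junctions

section Words

variable {G X : Type*} [Group G] [MetricSpace X] [MulAction G X] [IsIsometricSMul G X]
  {w : G} {x₀ : X} {D K : ℝ}

/-- Elements `e`, `f`, `b`, `f'` for which the orbits of `w` along the word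
`w ^ n * e * w ^ m * f⁻¹ * b * f' * w ^ m * e * w ^ n` form junctions, and `m` is large. -/
structure JunctionWord (w : G) (x₀ : X) (D K : ℝ) (e f b f' : G) (m : ℤ) : Prop where
  branch : Junction w x₀ K 1 e x₀ (e • x₀)
  bridge : Junction w x₀ K f (b * f') x₀ (b • x₀)
  far : 2 * K + 7 * D + dist x₀ (f • x₀) + dist x₀ (f' • x₀) < dist x₀ ((w ^ m) • x₀)

/-- The part of the word before the bridge `b`. -/
def wordHead (w e f : G) (m n : ℤ) : G := w ^ n * e * w ^ m * f⁻¹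

/-- The whole word. -/
def word (w e f b f' : G) (m n : ℤ) : G :=
  wordHead w e f m n * b * f' * w ^ m * e * w ^ n

namespace JunctionWord

variable {e f b f' : G} {m : ℤ}

lemma junction_start (h : JunctionWord w x₀ D K e f b f' m) (n : ℤ) :
    Junction w x₀ K 1 (wordHead w e f m n * f) ((w ^ n) • x₀) ((w ^ n * e) • x₀) := by
  have H := h.branch.smul (w ^ n)
  rw [← mul_smul, Junction, mul_one, ← one_mul (w ^ n), line_mul_zpow, one_mul] at H
  rwa [Junction, wordHead, inv_mul_cancel_right, line_mul_zpow]

lemma junction_middle (h : JunctionWord w x₀ D K e f b f' m) (n : ℤ) :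
    Junction w x₀ K (wordHead w e f m n * f) (wordHead w e f m n * (b * f'))
      (wordHead w e f m n • x₀) (wordHead w e f m n • b • x₀) :=
  h.bridge.smul _

lemma junction_end (h : JunctionWord w x₀ D K e f b f' m) (n : ℤ) :
    Junction w x₀ K (wordHead w e f m n * (b * f')) (word w e f b f' m n)
      ((wordHead w e f m n * (b * f') * w ^ m) • x₀)
      (word w e f b f' m n • (w ^ (-n)) • x₀) := by
  have H := h.branch.smul (wordHead w e f m n * (b * f') * w ^ m)
  rw [Junction, mul_one, line_mul_zpow] at H
  rw [Junction, word, line_mul_zpow, ← mul_smul]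
  simp only [mul_assoc, zpow_neg, mul_inv_cancel, mul_one] at H ⊢
  simp only [← mul_smul, mul_assoc] at H
  exact H

lemma dist_start (h : JunctionWord w x₀ D K e f b f' m) (n : ℤ) :
    2 * K + 7 * D < dist (wordHead w e f m n • x₀) ((w ^ n * e) • x₀) := by
  have e1 : w ^ n * e = wordHead w e f m n * (f * w ^ (-m)) := by
    simp [wordHead, mul_assoc]
  rw [e1, mul_smul, dist_smul, mul_smul]
  have h1 := dist_triangle (f • x₀) x₀ (f • w ^ (-m) • x₀)
  rw [dist_smul, dist_comm (f • x₀) x₀] at h1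
  have h2 : dist x₀ ((w ^ (-m)) • x₀) = dist x₀ ((w ^ m) • x₀) := by
    rw [← dist_smul (w ^ m), ← mul_smul, ← zpow_add, add_neg_cancel, zpow_zero, one_smul, dist_comm]
  linarith [h.far, dist_nonneg (x := x₀) (y := f' • x₀)]

lemma dist_end (h : JunctionWord w x₀ D K e f b f' m) (n : ℤ) :
    2 * K + 7 * D < dist ((wordHead w e f m n * (b * f') * w ^ m) • x₀)
      (wordHead w e f m n • b • x₀) := by
  rw [mul_assoc, mul_smul, dist_smul, mul_assoc, mul_smul, dist_smul, mul_smul]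
  have h1 := dist_triangle (f' • x₀) x₀ (f' • w ^ m • x₀)
  rw [dist_smul, dist_comm (f' • x₀) x₀] at h1
  rw [dist_comm (f' • w ^ m • x₀) x₀]
  linarith [h.far, dist_nonneg (x := x₀) (y := f • x₀)]

variable [ProperSpace X] [ProperlyDiscontinuousSMul G X]

/-- A point which does not backtrack along the end of the word sees all the orbits along it. -/
lemma seen_from_end (hX : GeodesicSpace X) (hA : Bottleneck D (line w x₀ 1))
    (h : JunctionWord w x₀ D K e f b f' m) {n : ℤ} {x p : X}
    (hp : p ∈ projSet (line w x₀ 1) x) (hd : K + D < dist p ((w ^ (-n)) • x₀)) :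
    Seen w x₀ (K + 3 * D) (wordHead w e f m n * (b * f')) (word w e f b f' m n • x)
        ((wordHead w e f m n * (b * f') * w ^ m) • x₀) ∧
      Seen w x₀ (K + 3 * D) (wordHead w e f m n * f) (word w e f b f' m n • x)
        (wordHead w e f m n • x₀) ∧
      Seen w x₀ (K + 3 * D) 1 (word w e f b f' m n • x) ((w ^ n) • x₀) := by
  have hD := hA.1
  have hp' : word w e f b f' m n • p ∈
      projSet (line w x₀ (word w e f b f' m n)) (word w e f b f' m n • x) := by
    have := (smul_mem_projSet_line (w := w) (x₀ := x₀) (word w e f b f' m n) 1).2 hp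
    rwa [mul_one] at this
  have h1 := (h.junction_end n).symm.seen_of_lt hX hA hp' (by rwa [dist_smul])
  have h2 := (h.junction_middle n).symm.seen hX hA h1 (by linarith [h.dist_end n])
  exact ⟨h1, h2, (h.junction_start n).symm.seen hX hA h2 (by linarith [h.dist_start n])⟩

lemma seen_from_start (hX : GeodesicSpace X) (hA : Bottleneck D (line w x₀ 1))
    (h : JunctionWord w x₀ D K e f b f' m) {n : ℤ} {y p : X}
    (hp : p ∈ projSet (line w x₀ 1) y) (hd : K + D < dist p ((w ^ n) • x₀)) :
    Seen w x₀ (K + 3 * D) (wordHead w e f m n * f) y ((w ^ n * e) • x₀) ∧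
      Seen w x₀ (K + 3 * D) (wordHead w e f m n * (b * f')) y
        (wordHead w e f m n • b • x₀) := by
  have hD := hA.1
  have h1 := (h.junction_start n).seen_of_lt hX hA hp hd
  refine ⟨h1, (h.junction_middle n).seen hX hA h1 ?_⟩
  rw [dist_comm]
  linarith [h.dist_start n]

/-- Geodesics along the word pass close to both ends of the bridge, hence are not Morse. -/
lemma not_morseOn (hX : GeodesicSpace X) (hA : Bottleneck D (line w x₀ 1))
    (h : JunctionWord w x₀ D K e f b f' m) {N : ℝ → ℝ}
    (hb : ∀ (α : ℝ → X) (S : ℝ), GeodesicOn (Set.Icc 0 S) α →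
      MorseOn N (Set.Icc 0 S) α → ∀ s ∈ Set.Icc 0 S, ∀ t ∈ Set.Icc 0 S,
        dist (α s) x₀ ≤ K + 4 * D → K + 4 * D < dist (α t) (b • x₀))
    {n : ℤ} {x y p q : X} (hp : p ∈ projSet (line w x₀ 1) x)
    (hpd : K + D < dist p ((w ^ (-n)) • x₀)) (hq : q ∈ projSet (line w x₀ 1) y)
    (hqd : K + D < dist q ((w ^ n) • x₀)) {α : ℝ → X} {S : ℝ}
    (hα : IsGeodesicSegment α S (word w e f b f' m n • x) y) : ¬ MorseOn N (Set.Icc 0 S) α := by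
  intro hM
  obtain ⟨h1, h2, -⟩ := h.seen_from_end hX hA hp hpd
  obtain ⟨h3, h4⟩ := h.seen_from_start hX hA hq hqd
  obtain ⟨⟨s, hs, hds⟩, -⟩ := h2.exists_near hA h3 (by linarith [h.dist_start n]) hα
  obtain ⟨-, t, ht, hdt⟩ := h1.exists_near hA h4 (by linarith [h.dist_end n]) hα
  set k := wordHead w e f m n
  have e1 : ∀ z z' : X, dist (k⁻¹ • z) z' = dist z (k • z') := fun z z' => by
    rw [← dist_smul k, smul_inv_smul]
  have := hb _ S (hα.2.2.2.smul k⁻¹) (hM.smul k⁻¹) s hs t ht (by rw [e1]; linarith)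
  rw [e1] at this
  linarith

end JunctionWord

/-- A uniform comparison of projections over the stabilizer of the base point. -/
lemma exists_stabilizer_comparison [ProperSpace X] [ProperlyDiscontinuousSMul G X]
    (hX : GeodesicSpace X) (hA : Bottleneck D (line w x₀ 1)) (hw : ∀ k : ℤ, k ≠ 0 → w ^ k ≠ 1) :
    ∃ E : ℝ, ∀ s : G, s • x₀ = x₀ → ∀ x p p' : X, p ∈ projSet (line w x₀ 1) x →
      p' ∈ projSet (line w x₀ 1) (s • x) →
      dist x₀ p ≤ E ∨ dist x₀ p' ≤ E ∨ |dist x₀ p - dist x₀ p'| ≤ E := by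
  choose E hE using exists_proj_comparison hX hA hw
  have hF : {s : G | dist (s • x₀) x₀ ≤ 0}.Finite := finite_setOf_dist_smul_le x₀ x₀ _
  refine ⟨∑ s ∈ hF.toFinset, |E s|, fun s hs x p p' hp hp' => ?_⟩
  have hsF : s ∈ hF.toFinset := by
    rw [hF.mem_toFinset]
    show dist (s • x₀) x₀ ≤ 0
    rw [hs, dist_self]
  have h1 : E s ≤ ∑ s ∈ hF.toFinset, |E s| := (le_abs_self _).trans
    (Finset.single_le_sum (f := fun s => |E s|) (fun _ _ => abs_nonneg _) hsF)
  rcases hE s x p p' hp hp' with h | h | h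
  · exact Or.inl (h.trans h1)
  · exact Or.inr (Or.inl (h.trans h1))
  · exact Or.inr (Or.inr (h.trans h1))

end Words

lemma exists_eq_of_unique {P : ℕ → Prop} (h : ∀ i j, P i → P j → i = j) :
    ∃ i₀, ∀ i, P i → i = i₀ := by
  by_cases hP : ∃ i, P i
  · obtain ⟨i₀, h₀⟩ := hP
    exact ⟨i₀, fun i hi => h i i₀ hi h₀⟩
  · exact ⟨0, fun i hi => absurd ⟨i, hi⟩ hP⟩

lemma transConcat_end {G X : Type*} [Group G] [MulAction G X] {g : G} {η lam : ℝ → X}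
    {T T' : ℝ} {x₀ : X} (hη : η T = g • x₀) (h0 : lam 0 = x₀) (hT' : 0 ≤ T') :
    transConcat g η T lam (T + T') = g • lam T' := by
  unfold transConcat
  split_ifs with h
  · obtain rfl : T' = 0 := by linarith
    rw [add_zero, hη, h0]
  · rw [add_sub_cancel_left]

end MorseLTG

open MorseLTG in
theorem stmt16 {G : Type*} [Group G] [Group.FG G] {X : Type*} [MetricSpace X] [ProperSpace X]
    [MulAction G X] (hX : GeodesicSpace X) (x₀ : X) (hG : IsGeometricAction G X)
    (hnh : ¬ GromovHyperbolic X) (hmltg : MLTG X)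
    (hray : ∃ (γ : ℝ → X) (C : ℝ), IsGeodesicRay γ x₀ ∧ ContractingSet C (γ '' Set.Ici 0))
    (N : ℝ → ℝ) (hN : IsMorseGauge N) :
    ∃ (η : ℕ → ℝ → X) (T : ℕ → ℝ),
      (∀ i, ∃ g : G, IsGeodesicSegment (η i) (T i) x₀ (g • x₀)) ∧
      ∀ (lam : ℝ → X) (Tl : ℝ), (∃ h : G, IsGeodesicSegment lam Tl x₀ (h • x₀)) →
        ∃ i₀ i₁ : ℕ,
          (∀ i j : ℕ, i ≠ j → i ∉ ({i₀, i₁} : Set ℕ) → j ∉ ({i₀, i₁} : Set ℕ) →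
            ∀ g g' : G, η i (T i) = g • x₀ → η j (T j) = g' • x₀ →
            ∀ (α : ℝ → X) (S : ℝ),
              IsGeodesicSegment α S (transConcat g (η i) (T i) lam (T i + Tl))
                (transConcat g' (η j) (T j) lam (T j + Tl)) →
              ¬ MorseOn N (Set.Icc 0 S) α) ∧
          (∀ i : ℕ, i ∉ ({i₀, i₁} : Set ℕ) →
            ∀ g : G, η i (T i) = g • x₀ →
            ∀ (α : ℝ → X) (S : ℝ),
              IsGeodesicSegment α S (transConcat g (η i) (T i) lam (T i + Tl)) (lam Tl) →
              ¬ MorseOn N (Set.Icc 0 S) α) := by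
  obtain ⟨hiso, hpd, K₀, hK₀, hcov⟩ := hG
  obtain ⟨R, hR, hdense⟩ := exists_coarsely_dense (G := G) x₀ hK₀ hcov
  obtain ⟨γ, C, ⟨-, hγ⟩, hC⟩ := hray
  have hray' : Bottleneck (13 * max C 1) (γ '' Set.Ici 0) :=
    (hC.mono (le_max_left C 1)).bottleneck (lt_max_of_lt_right one_pos)
      (projSet_nonempty_of_isClosed (hγ.isClosed_image isClosed_Ici)
        (Set.nonempty_Ici.image γ))
  obtain ⟨w, D, hA, hw⟩ := exists_bottleneck_line hX x₀ hR hdense hγ hray'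
  have hD := hA.1
  obtain ⟨e, K₁, hK₁, he⟩ := exists_junction hX hnh hw hA hdense
  obtain ⟨E, hE⟩ := exists_stabilizer_comparison hX hA hw
  set ε := dist x₀ (e • x₀) with hε
  have hε0 : 0 ≤ ε := dist_nonneg
  set K₂ := K₁ + 3 * D + ε with hK₂
  set K := 2 * K₂ + 3 * D with hK
  obtain ⟨b, hbfar, hb⟩ := exists_not_morse hX hnh hR hdense hN (D := K + 4 * D)
    (R₀ := 5 * D + 3 * K₂ + 1) (by linarith) (by linarith)
  obtain ⟨f, hf, hfs⟩ := he.exists_seen hX hA (b • x₀)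
  obtain ⟨f', hf', hfs'⟩ := he.exists_seen hX hA (b⁻¹ • x₀)
  have hfs'' := hfs'.smul b
  rw [smul_inv_smul] at hfs''
  obtain ⟨m₀, hm₀⟩ := exists_lt_dist_zpow hw x₀ (2 * K + 7 * D + ε + ε)
  have hfε : ∀ f : G, f = 1 ∨ f = e → dist x₀ (f • x₀) ≤ ε := by
    rintro f (rfl | rfl)
    · simpa using hε0
    · exact hε.ge
  have hW : JunctionWord w x₀ D K e f b f' m₀ :=
    { branch := he.mono (by linarith)
      bridge := junction_of_bridge hX hA hfs hfs'' (by linarith)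
      far := by linarith [hm₀ m₀ (by simp), hfε f hf, hfε f' hf'] }
  obtain ⟨μ, hμB, hμ⟩ := exists_spread_exponents hw x₀ (2 * K + 4 * D + |E|)
  have hE1 := le_abs_self E
  have hE0 := abs_nonneg E
  set g₀ : ℕ → G := fun i => word w e f b f' m₀ (μ i) with hg₀
  choose η T hη using fun i => hX x₀ (g₀ i • x₀)
  refine ⟨η, T, fun i => ⟨g₀ i, hη i⟩, ?_⟩
  rintro lam Tl ⟨h, hlam⟩
  have hnorm : ∀ i, dist x₀ ((w ^ (-μ i)) • x₀) = dist x₀ ((w ^ μ i) • x₀) := fun i => by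
    rw [← dist_smul (w ^ μ i), ← mul_smul, ← zpow_add, add_neg_cancel, zpow_zero, one_smul,
      dist_comm]
  obtain ⟨i₀, hi₀⟩ := exists_eq_of_unique (P := fun i => ∃ s : G, s • x₀ = x₀ ∧
      ∃ p ∈ projSet (line w x₀ 1) (s • h • x₀), dist p ((w ^ (-μ i)) • x₀) ≤ K + D) (by
    rintro i j ⟨s, hs, p, hp, hdp⟩ ⟨s', hs', p', hp', hdp'⟩
    by_contra hij
    have h1 := hμ i j hij
    rw [← hnorm i, ← hnorm j] at h1
    have a1 := dist_triangle x₀ p ((w ^ (-μ i)) • x₀)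
    have a2 := dist_triangle_right x₀ p ((w ^ (-μ i)) • x₀)
    have a3 := dist_triangle x₀ p' ((w ^ (-μ j)) • x₀)
    have a4 := dist_triangle_right x₀ p' ((w ^ (-μ j)) • x₀)
    have b1 := hμB i
    have b2 := hμB j
    rw [← hnorm i] at b1
    rw [← hnorm j] at b2
    rcases hE (s' * s⁻¹) (by rw [mul_smul, inv_smul_eq_iff.2 hs.symm, hs']) (s • h • x₀) p p' hp
      (by rwa [mul_smul, inv_smul_smul]) with c | c | c
    · linarith
    · linarith
    · rw [abs_le] at c
      rcases lt_abs.1 h1 with h2 | h2 <;> linarith)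
  obtain ⟨i₁, hi₁⟩ := exists_eq_of_unique (P := fun i =>
      ∃ p ∈ projSet (line w x₀ 1) (h • x₀), dist p ((w ^ μ i) • x₀) ≤ K + D) (by
    rintro i j ⟨p, hp, hdp⟩ ⟨p', hp', hdp'⟩
    by_contra hij
    have h1 := hμ i j hij
    have h2 := hA.dist_proj_le hX hp hp'
    rw [dist_self] at h2
    have a1 := abs_dist_sub_le ((w ^ μ i) • x₀) ((w ^ μ j) • x₀) x₀
    rw [dist_comm _ x₀, dist_comm _ x₀] at a1
    have a2 := dist_triangle4 ((w ^ μ i) • x₀) p p' ((w ^ μ j) • x₀)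
    rw [dist_comm _ p] at a2
    linarith)
  refine ⟨i₀, i₁, ?_⟩
  have hx : ∀ i, i ≠ i₀ → ∀ g : G, η i (T i) = g • x₀ → ∃ x p : X,
      transConcat g (η i) (T i) lam (T i + Tl) = g₀ i • x ∧ p ∈ projSet (line w x₀ 1) x ∧
        K + D < dist p ((w ^ (-μ i)) • x₀) := by
    intro i hi g hg
    have hs : ((g₀ i)⁻¹ * g) • x₀ = x₀ := by
      rw [mul_smul, ← hg, (hη i).2.2.1, inv_smul_smul]
    obtain ⟨p, hp⟩ := projSet_line_nonempty w x₀ 1 (((g₀ i)⁻¹ * g) • h • x₀)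
    refine ⟨_, p, ?_, hp, ?_⟩
    · rw [transConcat_end hg hlam.2.1 hlam.1, hlam.2.2.1, mul_smul, smul_inv_smul]
    · by_contra hcon
      exact hi (hi₀ i ⟨_, hs, p, hp, not_lt.1 hcon⟩)
  constructor
  · intro i j hij hi hj g g' hg hg' α S hα
    simp only [Set.mem_insert_iff, Set.mem_singleton_iff, not_or] at hi hj
    obtain ⟨x, p, hxe, hp, hpd⟩ := hx i hi.1 g hg
    obtain ⟨y, q, hye, hq, hqd⟩ := hx j hj.1 g' hg'
    rw [hxe, hye] at hα
    obtain ⟨q', hq'⟩ := projSet_line_nonempty w x₀ 1 (g₀ j • y)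
    refine hW.not_morseOn hX hA hb hp hpd hq' ?_ hα
    have h1 := (hW.seen_from_end hX hA hq hqd).2.2 q' hq'
    have h2 := hμ i j hij
    have a1 := abs_dist_sub_le ((w ^ μ i) • x₀) ((w ^ μ j) • x₀) x₀
    rw [dist_comm _ x₀, dist_comm _ x₀] at a1
    have a2 := dist_triangle_left ((w ^ μ i) • x₀) ((w ^ μ j) • x₀) q'
    linarith
  · intro i hi g hg α S hα
    simp only [Set.mem_insert_iff, Set.mem_singleton_iff, not_or] at hi
    obtain ⟨x, p, hxe, hp, hpd⟩ := hx i hi.1 g hg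
    rw [hxe, hlam.2.2.1] at hα
    obtain ⟨q, hq⟩ := projSet_line_nonempty w x₀ 1 (h • x₀)
    refine hW.not_morseOn hX hA hb hp hpd hq ?_ hα
    by_contra hcon
    exact hi.2 (hi₁ i ⟨q, hq, not_lt.1 hcon⟩)
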